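/- Let p and q be coprime square-free integers with p ≡ 2 (mod 4), q ≡ 3 (mod 4), p ≥ 10 and q ≥ 10, and let K = ℚ(√p, √q). Then the Pythagoras number of the ring of integers O_K equals 7; in particular, the element 7 + (1+√p)² + (1+√q)² + ((√p+√(pq))/2)² of O_K has length exactly 7 (it is a sum of 7 squares in O_K but not of 6). -/

import Mathlib

/-!
Upper bound. The ring of integers of `ℚ(√p, √q)` has the `ℤ`-basis `1, √p, √q, (√p + √(pq)) / 2`
(`comb_mem`, `exists_comb`). Writing `xᵢ` in this basis with coordinate vector `Xᵢ ∈ ℤ⁴`, the sum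
`∑ xᵢ²` depends only on the matrix `∑ Xᵢ Xᵢᵀ`, so the bound `7` follows from the theorem of Mordell
and Ko (`gram_rep`): a positive semidefinite quaternary integral form that is a sum of squares of
integral linear forms is a sum of seven such squares. More precisely, every positive definite
quaternary form with integral matrix is a sum of seven squares (`pd_rep`). The proof has four steps.

* Pass to a maximal integral lattice containing the given one (`exists_maximal`). Its determinant is
  divisible by no cube of a prime, and not by `4`.
* Border the Gram matrix three times to obtain a positive definite unimodular form in seven
  variables (`exists_unimodular`). The first two borderings use Dirichlet's theorem on primes in
  progressions and quadratic reciprocity to make the last one solvable.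
* Over `ℤ[1/2]` this unimodular form is a sum of seven squares (`repL_of_unimodular`): by Hermite's
  inequality (`hermite`) a form of determinant `1` or `2` in at most seven variables takes the value
  `1` or `2` at a basis vector, which can be split off over `ℤ[1/2]`; the rest has determinant a power
  of `2` and is enlarged to determinant `1` or `2` again.
* The quaternary lattice is now isometrically embedded in `ℤ[1/2]⁷` with integral inner products. If
  it is not contained in `ℤ⁷`, a reflection in a vector of norm one makes one more vector integral
  and spoils none (`exists_reflection`). After finitely many reflections the lattice lies in `ℤ⁷`
  (`integralize`).

Lower bound. If `7 + (1+√p)² + (1+√q)² + ((√p+√(pq))/2)²` is a sum of six squares, comparing the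
coefficients of `1, √p, √q, √(pq)` (linearly independent by `coeff_zero`) and using `p, q ≥ 10`
determines three of the six summands so precisely that `7` would be the sum of the squares of the
three remaining integers, which is impossible modulo `8` (`no_six`).
-/

/-- The totally real biquadratic field `ℚ(√p, √q)` as a subfield of `ℝ`. -/
noncomputable def biqField (p q : ℕ) : IntermediateField ℚ ℝ :=
  IntermediateField.adjoin ℚ {Real.sqrt p, Real.sqrt q}

/-- The ring of integers of a subfield `K` of `ℝ`, viewed as the set of elements
of `K` that are integral over `ℤ`. -/
def ringOfInt (K : IntermediateField ℚ ℝ) : Set ℝ :=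
  {x : ℝ | x ∈ K ∧ IsIntegral ℤ x}

/-- `α` is a sum of `n` squares of elements of `S`. -/
def SumOfNSquaresIn (S : Set ℝ) (n : ℕ) (α : ℝ) : Prop :=
  ∃ x : Fin n → ℝ, (∀ i, x i ∈ S) ∧ α = ∑ i, x i ^ 2

/-- `α` is a sum of squares of elements of `S`. -/
def IsSumOfSquaresIn (S : Set ℝ) (α : ℝ) : Prop := ∃ n, SumOfNSquaresIn S n α

/-- `K` is a totally real biquadratic field. -/
def IsBiquadratic (K : IntermediateField ℚ ℝ) : Prop :=
  ∃ p q : ℕ, Squarefree p ∧ Squarefree q ∧ 1 < p ∧ 1 < q ∧ p ≠ q ∧ K = biqField p q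

open Matrix

set_option linter.unusedSectionVars false

/-! ### Positive definite integral matrices, bordering and Schur complements -/

/-- Positive definiteness of a symmetric integral matrix, tested on integral vectors. -/
def PD {ι : Type} [Fintype ι] (G : Matrix ι ι ℤ) : Prop :=
  Gᵀ = G ∧ ∀ x : ι → ℤ, x ≠ 0 → 0 < x ⬝ᵥ G *ᵥ x

section basics

variable {ι κ : Type} [Fintype ι] [DecidableEq ι] [Fintype κ] [DecidableEq κ]

lemma dot_conj (P : Matrix κ ι ℤ) (G : Matrix κ κ ℤ) (x y : ι → ℤ) :
    x ⬝ᵥ (Pᵀ * G * P) *ᵥ y = (P *ᵥ x) ⬝ᵥ G *ᵥ (P *ᵥ y) := by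
  rw [← Matrix.mulVec_mulVec, ← Matrix.mulVec_mulVec, Matrix.dotProduct_mulVec x,
    Matrix.vecMul_transpose]

lemma mulVec_ne_zero_of_det {P : Matrix ι ι ℤ} (h : P.det ≠ 0) {x : ι → ℤ} (hx : x ≠ 0) :
    P *ᵥ x ≠ 0 := fun h0 => hx (Matrix.eq_zero_of_mulVec_eq_zero h h0)

lemma PD.conj {G : Matrix ι ι ℤ} (hG : PD G) {P : Matrix ι ι ℤ} (h : P.det ≠ 0) :
    PD (Pᵀ * G * P) := by
  refine ⟨by simp [Matrix.transpose_mul, hG.1, Matrix.mul_assoc], fun x hx => ?_⟩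
  rw [dot_conj]
  exact hG.2 _ (mulVec_ne_zero_of_det h hx)

lemma PD.of_conj {F F' P : Matrix ι ι ℤ} (hF : PD F) (hs : F'ᵀ = F') (h : P.det ≠ 0)
    (e : F = Pᵀ * F' * P) : PD F' := by
  refine ⟨hs, fun y hy => ?_⟩
  have hadj : P.adjugate *ᵥ y ≠ 0 := by
    intro h0
    have : P *ᵥ (P.adjugate *ᵥ y) = P.det • y := by
      rw [Matrix.mulVec_mulVec, Matrix.mul_adjugate, Matrix.smul_mulVec, Matrix.one_mulVec]
    rw [h0, Matrix.mulVec_zero] at this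
    exact (smul_ne_zero h hy) this.symm
  have := hF.2 _ hadj
  rw [e, dot_conj, Matrix.mulVec_mulVec, Matrix.mul_adjugate, Matrix.smul_mulVec,
    Matrix.one_mulVec, Matrix.mulVec_smul, smul_dotProduct, dotProduct_smul, smul_smul,
    smul_eq_mul] at this
  exact pos_of_mul_pos_right (by simpa using this) (mul_self_nonneg _)

lemma PD.det_ne_zero {G : Matrix ι ι ℤ} (hG : PD G) : G.det ≠ 0 := by
  intro h
  obtain ⟨v, hv, h0⟩ := Matrix.exists_mulVec_eq_zero_iff.mpr h
  have := hG.2 v hv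
  simp [h0] at this

lemma PD.apply_symm {G : Matrix ι ι ℤ} (hG : PD G) (i j : ι) : G i j = G j i := by
  conv_lhs => rw [← hG.1]
  rfl

lemma PD.dot_symm {G : Matrix ι ι ℤ} (hG : PD G) (x y : ι → ℤ) :
    x ⬝ᵥ G *ᵥ y = y ⬝ᵥ G *ᵥ x := by
  rw [Matrix.dotProduct_mulVec, ← Matrix.mulVec_transpose, hG.1, dotProduct_comm]

lemma PD.reindex {G : Matrix ι ι ℤ} (hG : PD G) (e : ι ≃ κ) :
    PD (G.submatrix e.symm e.symm) := by
  refine ⟨by rw [Matrix.transpose_submatrix, hG.1], fun x hx => ?_⟩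
  have h : x ∘ e ≠ 0 := by
    intro h0
    apply hx
    funext k
    simpa using congrFun h0 (e.symm k)
  have := hG.2 _ h
  rw [Matrix.submatrix_mulVec_equiv]
  convert this using 1
  simp only [dotProduct, Function.comp]
  exact (Equiv.sum_comp e (fun k => x k * (G *ᵥ (x ∘ e)) (e.symm k))).symm.trans (by simp [Function.comp_def])

lemma PD.diag_pos {G : Matrix ι ι ℤ} (hG : PD G) (i : ι) : 0 < G i i := by
  have := hG.2 (Pi.single i 1) (by simp)
  simpa using this

/-- The symmetric matrix obtained from `F` by adding a first row and column `(B, c)`. -/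
def bord (B : ℤ) (c : ι → ℤ) (F : Matrix ι ι ℤ) : Matrix (Unit ⊕ ι) (Unit ⊕ ι) ℤ :=
  Matrix.fromBlocks (Matrix.of fun _ _ => B) (Matrix.of fun _ j => c j)
    (Matrix.of fun j _ => c j) F

lemma bord_dot (B : ℤ) (c : ι → ℤ) {F : Matrix ι ι ℤ} (x : Unit ⊕ ι → ℤ) :
    x ⬝ᵥ bord B c F *ᵥ x = B * x (Sum.inl ()) ^ 2
      + 2 * x (Sum.inl ()) * (c ⬝ᵥ (x ∘ Sum.inr))
      + (x ∘ Sum.inr) ⬝ᵥ F *ᵥ (x ∘ Sum.inr) := by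
  have h11 : bord B c F (Sum.inl ()) (Sum.inl ()) = B := rfl
  have h12 : ∀ j, bord B c F (Sum.inl ()) (Sum.inr j) = c j := fun _ => rfl
  have h21 : ∀ j, bord B c F (Sum.inr j) (Sum.inl ()) = c j := fun _ => rfl
  have h22 : ∀ i j, bord B c F (Sum.inr i) (Sum.inr j) = F i j := fun _ _ => rfl
  simp only [dotProduct, Matrix.mulVec, Fintype.sum_sum_type, Finset.univ_unique,
    PUnit.default_eq_unit, Finset.sum_singleton, h11, h12, h21, h22, Function.comp, mul_add,
    Finset.sum_add_distrib]
  have e1 : ∑ i, x (Sum.inr i) * (c i * x (Sum.inl ())) =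
    x (Sum.inl ()) * ∑ i, c i * x (Sum.inr i) := by
      rw [Finset.mul_sum]; exact Finset.sum_congr rfl fun _ _ => by ring
  rw [e1]
  ring

/-- Cauchy's expansion of a bordered determinant. -/
lemma bord_det (B : ℤ) (c : ι → ℤ) {F : Matrix ι ι ℤ} (hF : F.det ≠ 0) :
    (bord B c F).det = F.det * B - c ⬝ᵥ F.adjugate *ᵥ c := by
  set Q : Matrix (Unit ⊕ ι) (Unit ⊕ ι) ℤ := Matrix.fromBlocks (Matrix.of fun _ _ => F.det) 0
    (Matrix.of fun j _ => - (F.adjugate *ᵥ c) j) 1 with hQ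
  have h1 : Q.det = F.det := by
    rw [hQ, Matrix.det_fromBlocks_zero₁₂]; simp
  have h2 : bord B c F * Q = Matrix.fromBlocks
      (Matrix.of fun _ _ => F.det * B - c ⬝ᵥ F.adjugate *ᵥ c) (Matrix.of fun _ j => c j) 0 F := by
    rw [hQ, bord, Matrix.fromBlocks_multiply]
    congr 1
    · ext; simp [Matrix.mul_apply, dotProduct]; ring
    · simp
    · ext i j
      have : F *ᵥ (F.adjugate *ᵥ c) = F.det • c := by
        rw [Matrix.mulVec_mulVec, Matrix.mul_adjugate, Matrix.smul_mulVec, Matrix.one_mulVec]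
      have := congrFun this i
      simp only [Matrix.mulVec, dotProduct, Pi.smul_apply, smul_eq_mul] at this
      simp [Matrix.mul_apply, Matrix.mulVec, dotProduct, this]; ring
    · simp
  have h3 := congrArg Matrix.det h2
  rw [Matrix.det_mul, h1, Matrix.det_fromBlocks_zero₂₁] at h3
  apply mul_right_cancel₀ hF
  rw [h3]; simp

/-- If the inner block is positive definite, positivity of the bordered determinant
suffices (completing the square). -/
lemma PD.bord {F : Matrix ι ι ℤ} (hF : PD F) (hd : 0 < F.det) {B : ℤ} {c : ι → ℤ}
    (h : 0 < (bord B c F).det) : PD (bord B c F) := by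
  constructor
  · simp only [_root_.bord, Matrix.fromBlocks_transpose, hF.1]; rfl
  intro x hx
  set s := x (Sum.inl ())
  set y := x ∘ Sum.inr with hy
  set u := F.det • y + s • (F.adjugate *ᵥ c) with hu
  have key : F.det ^ 2 * (x ⬝ᵥ _root_.bord B c F *ᵥ x) =
      u ⬝ᵥ F *ᵥ u + s ^ 2 * (F.det * (_root_.bord B c F).det) := by
    have e1 : F *ᵥ (F.adjugate *ᵥ c) = F.det • c := by
      rw [Matrix.mulVec_mulVec, Matrix.mul_adjugate, Matrix.smul_mulVec, Matrix.one_mulVec]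
    have e2 : (F.adjugate *ᵥ c) ⬝ᵥ F *ᵥ y = F.det * (c ⬝ᵥ y) := by
      rw [hF.dot_symm, e1, dotProduct_smul, dotProduct_comm, smul_eq_mul]
    rw [bord_dot, bord_det _ _ hd.ne', hu]
    simp only [Matrix.mulVec_add, Matrix.mulVec_smul, e1, add_dotProduct, dotProduct_add,
      smul_dotProduct, dotProduct_smul, e2, smul_eq_mul]
    rw [dotProduct_comm (F.adjugate *ᵥ c) c, dotProduct_comm y c]
    ring
  have hpos : 0 < F.det ^ 2 * (x ⬝ᵥ _root_.bord B c F *ᵥ x) := by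
    rw [key]
    by_cases hs : s = 0
    · have hy0 : y ≠ 0 := by
        intro h0
        apply hx
        funext i
        rcases i with i | i
        · exact hs
        · exact congrFun h0 i
      have hu0 : u ≠ 0 := by
        rw [hu, hs, zero_smul, add_zero]
        exact smul_ne_zero hd.ne' hy0
      have := hF.2 u hu0
      rw [hs]; simpa using this
    · have h1 : 0 ≤ u ⬝ᵥ F *ᵥ u := by
        by_cases hu0 : u = 0
        · simp [hu0]
        · exact (hF.2 u hu0).le
      have : 0 < s ^ 2 * (F.det * (_root_.bord B c F).det) := by positivity
      linarith
  exact pos_of_mul_pos_right hpos (by positivity)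

/-- The corner cofactor of a bordered matrix is the determinant of the inner block. -/
lemma bord_adjugate (B : ℤ) (c : ι → ℤ) (F : Matrix ι ι ℤ) :
    (bord B c F).adjugate (Sum.inl ()) (Sum.inl ()) = F.det := by
  rw [Matrix.adjugate_apply]
  have : (bord B c F).updateRow (Sum.inl ()) (Pi.single (Sum.inl ()) 1) =
      Matrix.fromBlocks 1 0 (Matrix.of fun j _ => c j) F := by
    ext i j
    rcases i with i | i <;> rcases j with j | j <;> simp [bord, Matrix.updateRow_apply]
  rw [this, Matrix.det_fromBlocks_zero₁₂]; simp

/-- Schur complement with respect to the corner entry of `bord t b G`, scaled by `t`. -/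
def schur (t : ℤ) (b : ι → ℤ) (G : Matrix ι ι ℤ) : Matrix ι ι ℤ :=
  Matrix.of fun i j => t * G i j - b i * b j

lemma schur_dot (t : ℤ) (b : ι → ℤ) (G : Matrix ι ι ℤ) (y : ι → ℤ) :
    y ⬝ᵥ schur t b G *ᵥ y = t * (y ⬝ᵥ G *ᵥ y) - (b ⬝ᵥ y) ^ 2 := by
  have e : schur t b G = t • G - Matrix.vecMulVec b b := by
    ext i j; simp only [schur, Matrix.of_apply, Matrix.sub_apply, Matrix.smul_apply, smul_eq_mul,
      Matrix.vecMulVec_apply]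
  simp only [e, Matrix.sub_mulVec, Matrix.smul_mulVec, Matrix.vecMulVec_mulVec,
    dotProduct_sub, dotProduct_smul, smul_eq_mul]
  simp [dotProduct_comm y b]; ring

lemma PD.schur {t : ℤ} {b : ι → ℤ} {G : Matrix ι ι ℤ} (h : PD (_root_.bord t b G)) :
    PD (schur t b G) := by
  have ht : 0 < t := h.diag_pos (Sum.inl ())
  have hs : Gᵀ = G := by
    ext i j; exact (h.apply_symm (Sum.inr j) (Sum.inr i))
  constructor
  · ext i j
    simp only [_root_.schur, Matrix.transpose_apply, Matrix.of_apply]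
    rw [← hs, Matrix.transpose_apply, hs, mul_comm (b i)]
  · intro y hy
    rw [schur_dot]
    have hx : (Sum.elim (fun _ => - (b ⬝ᵥ y)) (t • y) : Unit ⊕ ι → ℤ) ≠ 0 := by
      intro h0
      apply smul_ne_zero ht.ne' hy
      funext i
      exact congrFun h0 (Sum.inr i)
    have := h.2 _ hx
    rw [bord_dot] at this
    simp only [Sum.elim_inl, Sum.elim_comp_inr, Matrix.mulVec_smul, dotProduct_smul,
      smul_dotProduct, smul_eq_mul] at this
    have h2 : 0 < t * (t * (y ⬝ᵥ G *ᵥ y) - (b ⬝ᵥ y) ^ 2) := by linarith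
    exact pos_of_mul_pos_right h2 ht.le

lemma schur_det (t : ℤ) (b : ι → ℤ) (G : Matrix ι ι ℤ) :
    t * (schur t b G).det = t ^ Fintype.card ι * (bord t b G).det := by
  set Q : Matrix (Unit ⊕ ι) (Unit ⊕ ι) ℤ := Matrix.fromBlocks 1 (Matrix.of fun _ j => - b j)
    0 (Matrix.diagonal fun _ => t) with hQ
  have h1 : Q.det = t ^ Fintype.card ι := by
    rw [hQ, Matrix.det_fromBlocks_zero₂₁]; simp [Matrix.det_diagonal]
  have h2 : bord t b G * Q = Matrix.fromBlocks
      (Matrix.of fun _ _ => t) 0 (Matrix.of fun j _ => b j) (schur t b G) := by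
    rw [hQ, bord, Matrix.fromBlocks_multiply]
    congr 1
    · simp
    · ext i j; simp [Matrix.mul_apply, Matrix.diagonal_apply]; ring
    · simp
    · ext i j
      simp [Matrix.mul_apply, Matrix.diagonal_apply, schur]; ring
  have h3 := congrArg Matrix.det h2
  rw [Matrix.det_mul, h1, Matrix.det_fromBlocks_zero₁₂] at h3
  rw [mul_comm (t ^ _), h3]; simp

lemma schur_fromEntries (G : Matrix (Unit ⊕ ι) (Unit ⊕ ι) ℤ) (hs : Gᵀ = G) :
    G = bord (G (Sum.inl ()) (Sum.inl ())) (fun j => G (Sum.inl ()) (Sum.inr j))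
      (G.submatrix Sum.inr Sum.inr) := by
  ext i j
  rcases i with i | i <;> rcases j with j | j
  · rfl
  · rfl
  · exact (congrFun (congrFun hs (Sum.inl ())) (Sum.inr i))
  · rfl

end basics

lemma PD.det_pos_fin : ∀ (n : ℕ) (G : Matrix (Fin n) (Fin n) ℤ), PD G → 0 < G.det
  | 0, G, _ => by simp
  | n + 1, G, hG => by
    let e : Fin (n + 1) ≃ Unit ⊕ Fin n := (finSumFinEquiv (m := 1) (n := n)).symm.trans
       (Equiv.sumCongr (Equiv.ofUnique _ _) (Equiv.refl _)) |> (finCongr (Nat.add_comm n 1)).trans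
    have h1 := hG.reindex e
    set H := G.submatrix e.symm e.symm with hH
    have hd : H.det = G.det := by rw [hH, Matrix.det_submatrix_equiv_self]
    rw [schur_fromEntries H h1.1] at h1
    have ht := h1.diag_pos (Sum.inl ())
    have ht' : 0 < H (Sum.inl ()) (Sum.inl ()) := ht
    have h2 := PD.det_pos_fin n _ h1.schur
    have h3 := schur_det (H (Sum.inl ()) (Sum.inl ())) (fun j => H (Sum.inl ()) (Sum.inr j)) (H.submatrix Sum.inr Sum.inr)
    rw [← schur_fromEntries H (hG.reindex e).1, hd] at h3
    have h4 : 0 < H (Sum.inl ()) (Sum.inl ()) ^ Fintype.card (Fin n) * G.det := by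
      rw [← h3]; positivity
    exact pos_of_mul_pos_right h4 (by positivity)

lemma PD.det_pos {ι : Type} [Fintype ι] [DecidableEq ι] {G : Matrix ι ι ℤ} (hG : PD G) :
    0 < G.det := by
  have := PD.det_pos_fin _ _ (hG.reindex (Fintype.equivFin ι))
  rwa [Matrix.det_submatrix_equiv_self] at this

/-! ### Enlarging a lattice at a prime -/

section enl

variable {ι : Type} [Fintype ι] [DecidableEq ι]

/-- The vector `x / p` lies outside the lattice, and adjoining it keeps the form `F` integral: `x` is
nonzero modulo `p`, `F x ≡ 0 (mod p)` and `p²` divides the value of `F` at `x`. -/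
def Enl (F : Matrix ι ι ℤ) (p : ℕ) (x : ι → ℤ) : Prop :=
  (∃ i, ¬ (p : ℤ) ∣ x i) ∧ (∀ i, (p : ℤ) ∣ (F *ᵥ x) i) ∧ (p : ℤ) ^ 2 ∣ x ⬝ᵥ F *ᵥ x

lemma dvd_dotProduct {d : ℤ} {y : ι → ℤ} (h : ∀ i, d ∣ y i) (x : ι → ℤ) : d ∣ x ⬝ᵥ y :=
  Finset.dvd_sum fun i _ => (h i).mul_left _

/-- Adjoining `x / p` gives a lattice with Gram matrix `F'` containing the old one with index `p`;
the determinant drops by the factor `p²`. -/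
lemma Enl.enlarge {F : Matrix ι ι ℤ} (hF : PD F) {p : ℕ} (hp : p.Prime) {x : ι → ℤ}
    (h : Enl F p x) :
    ∃ F' P : Matrix ι ι ℤ, PD F' ∧ F = Pᵀ * F' * P ∧ F'.det * p ^ 2 = F.det := by
  obtain ⟨⟨i, hi⟩, h1, h2⟩ := h
  have hpp : Prime (p : ℤ) := Nat.prime_iff_prime_int.mp hp
  have hcop : IsCoprime (x i) (p : ℤ) := ((Prime.coprime_iff_not_dvd hpp).mpr hi).symm
  obtain ⟨u, v, huv⟩ := hcop
  -- replace `x` by a vector congruent to a multiple of it modulo `p` with `i`-th entry `1`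
  set x' : ι → ℤ := u • x + (v * p) • Pi.single i 1 with hx'
  have hx'i : x' i = 1 := by simp [hx', huv]
  have h1' : ∀ j, (p : ℤ) ∣ (F *ᵥ x') j := by
    intro j
    rw [hx', Matrix.mulVec_add, Matrix.mulVec_smul, Matrix.mulVec_smul]
    simp only [Pi.add_apply, Pi.smul_apply, smul_eq_mul]
    exact dvd_add ((h1 j).mul_left _) (Dvd.intro_left v rfl |>.mul_right _)
  have h2' : (p : ℤ) ^ 2 ∣ x' ⬝ᵥ F *ᵥ x' := by
    have e : x' ⬝ᵥ F *ᵥ x' = u ^ 2 * (x ⬝ᵥ F *ᵥ x) + 2 * u * v * (p * (F *ᵥ x) i)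
        + (p : ℤ) ^ 2 * (v ^ 2 * F i i) := by
      have e1 : x ⬝ᵥ F *ᵥ Pi.single i 1 = (F *ᵥ x) i := by
        rw [hF.dot_symm]; simp
      have e2 : (Pi.single i 1 : ι → ℤ) ⬝ᵥ F *ᵥ x = (F *ᵥ x) i := by simp
      have e3 : (Pi.single i 1 : ι → ℤ) ⬝ᵥ F *ᵥ Pi.single i 1 = F i i := by simp
      rw [hx']
      simp only [Matrix.mulVec_add, Matrix.mulVec_smul, add_dotProduct, dotProduct_add,
        smul_dotProduct, dotProduct_smul, smul_eq_mul, e1, e2, e3]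
      ring
    rw [e]
    refine dvd_add (dvd_add (h2.mul_left _) (Dvd.dvd.mul_left ?_ _)) (Dvd.intro _ rfl)
    rw [sq]; exact mul_dvd_mul_left _ (h1 i)
  set T : Matrix ι ι ℤ := (1 : Matrix ι ι ℤ).updateCol i x' with hT
  have hTdet : T.det = 1 := by
    rw [hT, ← Matrix.cramer_apply, Matrix.cramer_one]; simpa using hx'i
  have hTi : T *ᵥ Pi.single i 1 = x' := by
    ext j; simp [hT, Matrix.updateCol_apply]
  have hTj : ∀ j, j ≠ i → T *ᵥ Pi.single j 1 = Pi.single j 1 := by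
    intro j hj; ext k
    simp [hT, Matrix.updateCol_apply, hj, Matrix.one_apply, Pi.single_apply]
  set F'' := Tᵀ * F * T with hF''
  have hent : ∀ j k, F'' j k = (T *ᵥ Pi.single j 1) ⬝ᵥ F *ᵥ (T *ᵥ Pi.single k 1) := by
    intro j k; rw [← dot_conj]; simp [hF'']
  set d : ι → ℤ := fun j => if j = i then (p : ℤ) else 1 with hd
  have hdd : ∀ j k, d j * d k ∣ F'' j k := by
    intro j k
    rw [hent]
    by_cases hj : j = i <;> by_cases hk : k = i
    · subst hj; subst hk
      rw [hTi]; simpa [hd, ← sq] using h2'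
    · subst hj
      rw [hTi, hTj k hk, hF.dot_symm]; simpa [hd, hk] using h1' k
    · subst hk
      rw [hTi, hTj j hj]; simpa [hd, hj] using h1' j
    · simp [hd, hj, hk]
  set F' : Matrix ι ι ℤ := Matrix.of fun j k => F'' j k / (d j * d k) with hF'
  have hDF : F'' = Matrix.diagonal d * F' * Matrix.diagonal d := by
    ext j k
    rw [Matrix.mul_diagonal, Matrix.diagonal_mul, hF', Matrix.of_apply]
    have := Int.ediv_mul_cancel (hdd j k)
    linarith
  have hTT : T * T.adjugate = 1 := by rw [Matrix.mul_adjugate, hTdet, one_smul]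
  have hF''F : F = T.adjugateᵀ * F'' * T.adjugate := by
    rw [hF'']
    calc F = (T * T.adjugate)ᵀ * F * (T * T.adjugate) := by rw [hTT]; simp
      _ = _ := by rw [Matrix.transpose_mul]; simp only [Matrix.mul_assoc]
  have hDdet : (Matrix.diagonal d).det = p := by
    rw [Matrix.det_diagonal, hd]; simp
  have hadj : T.adjugate.det = 1 := by
    have := congrArg Matrix.det hTT
    rwa [Matrix.det_mul, hTdet, one_mul, Matrix.det_one] at this
  have hFP : F = (Matrix.diagonal d * T.adjugate)ᵀ * F' * (Matrix.diagonal d * T.adjugate) := by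
    conv_lhs => rw [hF''F, hDF]
    rw [Matrix.transpose_mul, Matrix.diagonal_transpose]; simp only [Matrix.mul_assoc]
  refine ⟨F', Matrix.diagonal d * T.adjugate, ?_, hFP, ?_⟩
  · refine PD.of_conj hF ?_ ?_ hFP
    · ext j k
      have : F''ᵀ = F'' := by
        rw [hF'']; simp [Matrix.transpose_mul, hF.1, Matrix.mul_assoc]
      have := congrFun (congrFun this j) k
      simp only [Matrix.transpose_apply] at this
      simp only [hF', Matrix.transpose_apply, Matrix.of_apply, this, mul_comm (d k)]
    · rw [Matrix.det_mul, hDdet, hadj, mul_one]; exact_mod_cast hp.ne_zero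
  · have := congrArg Matrix.det hFP
    rw [this]; simp only [Matrix.det_mul, Matrix.det_transpose, hDdet, hadj]; ring

end enl

/-! ### Maximal lattices -/

section smith

variable {ι : Type} [Fintype ι] [DecidableEq ι]

/-- Smith normal form over `ℤ`: `F = Z * diagonal a * Y⁻¹` with `Y`, `Z` unimodular. -/
lemma exists_smith (F : Matrix ι ι ℤ) (hF : F.det ≠ 0) :
    ∃ (Y Z : Matrix ι ι ℤ) (a : ι → ℤ), IsUnit Y.det ∧ IsUnit Z.det ∧
      F * Y = Z * Matrix.diagonal a := by
  have hinj : Function.Injective F.mulVecLin := by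
    rw [← LinearMap.ker_eq_bot, LinearMap.ker_eq_bot']
    intro m hm
    exact Matrix.eq_zero_of_mulVec_eq_zero hF hm
  let e := LinearEquiv.ofInjective F.mulVecLin hinj
  obtain ⟨b', a, ab', h⟩ := Submodule.exists_smith_normal_form_of_rank_eq (Pi.basisFun ℤ ι)
    (N := LinearMap.range F.mulVecLin) e.finrank_eq.symm
  let y : Module.Basis ι ℤ (ι → ℤ) := ab'.map e.symm
  refine ⟨(Pi.basisFun ℤ ι).toMatrix y, (Pi.basisFun ℤ ι).toMatrix b', a, ?_, ?_, ?_⟩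
  · have := (Pi.basisFun ℤ ι).toMatrix_mul_toMatrix_flip y
    exact IsUnit.of_mul_eq_one _ (by rw [← Matrix.det_mul, this, Matrix.det_one])
  · have := (Pi.basisFun ℤ ι).toMatrix_mul_toMatrix_flip b'
    exact IsUnit.of_mul_eq_one _ (by rw [← Matrix.det_mul, this, Matrix.det_one])
  · ext i j
    rw [Matrix.mul_diagonal]
    have h1 : F *ᵥ (y j) = a j • b' j := by
      rw [← h]
      have : e (y j) = ab' j := by simp [y]
      rw [← this]; rfl
    have := congrFun h1 i
    simp only [Pi.smul_apply, smul_eq_mul] at this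
    rw [mul_comm]
    simpa [Matrix.mul_apply, Matrix.mulVec, dotProduct, Module.Basis.toMatrix_apply] using this

/-- If no `a i` is divisible by `p²`, the exponent of `p` in the product is at most the number of
`a i` divisible by `p`. -/
lemma pow_dvd_prod_card {p : ℤ} (hp : Prime p) (a : ι → ℤ) (h : ∀ i, ¬ p ^ 2 ∣ a i) {k : ℕ}
    (hk : p ^ k ∣ ∏ i, a i) : k ≤ (Finset.univ.filter fun i => p ∣ a i).card := by
  classical
  have hb : ∀ i, ∃ b, a i = (if p ∣ a i then p else 1) * b ∧ ¬ p ∣ b := by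
    intro i
    by_cases hi : p ∣ a i
    · obtain ⟨b, hb⟩ := hi
      refine ⟨b, ?_, fun hd => h i ?_⟩
      · rw [if_pos (Dvd.intro _ hb.symm)]; exact hb
      · rw [hb, sq]; exact mul_dvd_mul_left _ hd
    · exact ⟨a i, by rw [if_neg hi, one_mul], hi⟩
  choose b hb1 hb2 using hb
  have e : ∏ i, a i = p ^ (Finset.univ.filter fun i => p ∣ a i).card * ∏ i, b i := by
    rw [Finset.prod_congr rfl fun i _ => hb1 i, Finset.prod_mul_distrib]
    congr 1
    rw [Finset.prod_ite]; simp
  by_contra hlt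
  push Not at hlt
  rw [e] at hk
  have h2 := (pow_dvd_pow p hlt).trans hk
  rw [pow_succ] at h2
  have h3 := (mul_dvd_mul_iff_left (pow_ne_zero _ hp.ne_zero)).mp h2
  obtain ⟨i, -, hi⟩ := (hp.dvd_finsetProd_iff _).mp h3
  exact hb2 i hi

/-- Chevalley–Warning: a quadratic form in at least three variables over `ZMod p` has a nontrivial
zero. -/
lemma exists_zero_mod {p : ℕ} [Fact p.Prime] (I : Finset ι) (hI : 3 ≤ I.card)
    (m : ι → ι → ZMod p) :
    ∃ t : ι → ZMod p, (∀ i ∉ I, t i = 0) ∧ (∃ i, t i ≠ 0) ∧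
      ∑ j ∈ I, ∑ k ∈ I, m j k * t j * t k = 0 := by
  classical
  let f : MvPolynomial I (ZMod p) :=
    ∑ j : I, ∑ k : I, MvPolynomial.C (m j k) * MvPolynomial.X j * MvPolynomial.X k
  have hdeg : f.totalDegree ≤ 2 := by
    refine MvPolynomial.totalDegree_finsetSum_le fun j _ =>
      MvPolynomial.totalDegree_finsetSum_le fun k _ => ?_
    refine (MvPolynomial.totalDegree_mul _ _).trans ?_
    refine (Nat.add_le_add (MvPolynomial.totalDegree_mul _ _) le_rfl).trans ?_
    simp
  have hcard := char_dvd_card_solutions p (f := f) (by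
    rw [Fintype.card_coe]; omega)
  have h0 : MvPolynomial.eval (0 : I → ZMod p) f = 0 := by simp [f]
  have hp : p.Prime := Fact.out
  have hex : ∃ t : I → ZMod p, t ≠ 0 ∧ MvPolynomial.eval t f = 0 := by
    by_contra hne
    push Not at hne
    have : Fintype.card {x : I → ZMod p // MvPolynomial.eval x f = 0} = 1 := by
      rw [Fintype.card_eq_one_iff]
      refine ⟨⟨0, h0⟩, fun ⟨x, hx⟩ => ?_⟩
      by_contra hx0
      exact hne x (fun h => hx0 (Subtype.ext h)) hx
    rw [this] at hcard
    exact hp.one_lt.ne' (Nat.dvd_one.mp hcard)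
  obtain ⟨t, ht, htf⟩ := hex
  refine ⟨fun i => if h : i ∈ I then t ⟨i, h⟩ else 0, ?_, ?_, ?_⟩
  · intro i hi; simp [hi]
  · obtain ⟨i, hi⟩ := Function.ne_iff.mp ht
    exact ⟨i, by simpa using hi⟩
  · rw [← htf]
    simp only [f, map_sum, map_mul, MvPolynomial.eval_C, MvPolynomial.eval_X]
    rw [← Finset.sum_coe_sort I]
    refine Finset.sum_congr rfl fun j _ => ?_
    rw [← Finset.sum_coe_sort I]
    refine Finset.sum_congr rfl fun k _ => ?_
    simp

/-- A vector with Smith coordinates `t` nonzero modulo `p` is enlarging at `p` once `p ∣ a i * t i`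
for all `i` and `p²` divides its value. -/
lemma enl_of_coords {F Y Z : Matrix ι ι ℤ} {a : ι → ℤ} (hY : IsUnit Y.det)
    (h : F * Y = Z * Matrix.diagonal a) {p : ℕ} {t : ι → ℤ} (ht : ∃ i, ¬ (p : ℤ) ∣ t i)
    (hat : ∀ i, (p : ℤ) ∣ a i * t i)
    (hq : (p : ℤ) ^ 2 ∣ t ⬝ᵥ (Yᵀ * F * Y) *ᵥ t) : Enl F p (Y *ᵥ t) := by
  refine ⟨?_, ?_, ?_⟩
  · by_contra hne
    push Not at hne
    obtain ⟨i, hi⟩ := ht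
    have e : Y.adjugate *ᵥ (Y *ᵥ t) = Y.det • t := by
      rw [Matrix.mulVec_mulVec, Matrix.adjugate_mul, Matrix.smul_mulVec, Matrix.one_mulVec]
    have h2 : (p : ℤ) ∣ (Y.adjugate *ᵥ (Y *ᵥ t)) i := dvd_dotProduct hne _
    rw [e, Pi.smul_apply, smul_eq_mul] at h2
    exact hi (hY.dvd_mul_left.mp h2)
  · intro i
    rw [Matrix.mulVec_mulVec, h, ← Matrix.mulVec_mulVec]
    refine dvd_dotProduct (fun j => ?_) _
    rw [Matrix.mulVec_diagonal]; exact hat j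
  · rwa [← dot_conj]

lemma smith_det {F Y Z : Matrix ι ι ℤ} {a : ι → ℤ} (hZ : IsUnit Z.det)
    (h : F * Y = Z * Matrix.diagonal a) {d : ℤ} (hd : d ∣ F.det) : d ∣ ∏ i, a i := by
  have := congrArg Matrix.det h
  rw [Matrix.det_mul, Matrix.det_mul, Matrix.det_diagonal] at this
  exact hZ.dvd_mul_left.mp (this ▸ hd.mul_right _)

lemma smith_gram_dvd {F Y Z : Matrix ι ι ℤ} {a : ι → ℤ}
    (h : F * Y = Z * Matrix.diagonal a) (j k : ι) : a k ∣ (Yᵀ * F * Y) j k := by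
  rw [Matrix.mul_assoc, h, ← Matrix.mul_assoc, Matrix.mul_diagonal]
  exact Dvd.intro_left _ rfl

lemma enl_of_sq_dvd {F Y Z : Matrix ι ι ℤ} {a : ι → ℤ} (hY : IsUnit Y.det)
    (h : F * Y = Z * Matrix.diagonal a) {p : ℕ} (hp : p.Prime) {i : ι}
    (hi : (p : ℤ) ^ 2 ∣ a i) : ∃ x, Enl F p x := by
  refine ⟨_, enl_of_coords hY h (t := Pi.single i 1) ⟨i, ?_⟩ (fun j => ?_) ?_⟩
  · simp only [Pi.single_eq_same]
    intro hd
    exact (Nat.prime_iff_prime_int.mp hp).not_isUnit (isUnit_of_dvd_one hd)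
  · by_cases hj : j = i
    · subst hj; simpa using (dvd_pow_self _ two_ne_zero).trans hi
    · simp [hj]
  · have := hi.trans (smith_gram_dvd h i i)
    simpa using this

/-- If `p³ ∣ det F`, there is an enlarging vector at `p`: either an elementary divisor is divisible
by `p²`, or at least three are divisible by `p`, and then `F / p` restricted to these coordinates
has a nontrivial zero modulo `p`. -/
lemma exists_enl_of_cube_dvd {F : Matrix ι ι ℤ} (hF : PD F) {p : ℕ} (hp : p.Prime)
    (hd : (p : ℤ) ^ 3 ∣ F.det) : ∃ x, Enl F p x := by
  classical
  obtain ⟨Y, Z, a, hY, hZ, h⟩ := exists_smith F hF.det_ne_zero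
  by_cases hsq : ∃ i, (p : ℤ) ^ 2 ∣ a i
  · obtain ⟨i, hi⟩ := hsq
    exact enl_of_sq_dvd hY h hp hi
  push Not at hsq
  have hI := pow_dvd_prod_card (Nat.prime_iff_prime_int.mp hp) a hsq (smith_det hZ h hd)
  set I := Finset.univ.filter fun i => (p : ℤ) ∣ a i
  set M := Yᵀ * F * Y with hM
  have : Fact p.Prime := ⟨hp⟩
  obtain ⟨t, ht1, ⟨i, hi⟩, ht3⟩ := exists_zero_mod (p := p) I hI
    (fun j k => ((M j k / p : ℤ) : ZMod p))
  refine ⟨_, enl_of_coords hY h (t := fun i => ((t i).val : ℤ)) ⟨i, ?_⟩ (fun j => ?_) ?_⟩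
  · intro hd
    apply hi
    have := (ZMod.intCast_zmod_eq_zero_iff_dvd ((t i).val : ℤ) p).mpr hd
    simpa using this
  · by_cases hj : j ∈ I
    · exact ((Finset.mem_filter.mp hj).2).mul_right _
    · simp [ht1 j hj]
  · have hs : (fun i => ((t i).val : ℤ)) ⬝ᵥ M *ᵥ (fun i => ((t i).val : ℤ)) =
        p * ∑ j ∈ I, ∑ k ∈ I, (M j k / p) * (t j).val * (t k).val := by
      have e0 : ∀ j, j ∉ I → ((t j).val : ℤ) = 0 := fun j hj => by simp [ht1 j hj]
      simp only [dotProduct, Matrix.mulVec, Finset.mul_sum]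
      rw [← Finset.sum_subset (Finset.subset_univ I)
        (fun j _ hj => by simp [e0 j hj])]
      refine Finset.sum_congr rfl fun j hj => ?_
      rw [← Finset.sum_subset (Finset.subset_univ I)
        (fun k _ hk => by simp [e0 k hk])]
      refine Finset.sum_congr rfl fun k hk => ?_
      have h1 : (p : ℤ) ∣ M j k := ((Finset.mem_filter.mp hk).2).trans (smith_gram_dvd h j k)
      have h2 := Int.mul_ediv_cancel' h1
      conv_lhs => rw [← h2]
      ring
    rw [← hM, hs, sq]
    refine mul_dvd_mul_left _ ?_
    rw [← ZMod.intCast_zmod_eq_zero_iff_dvd]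
    push_cast
    simpa using ht3

/-- At `2` already `4 ∣ det F` suffices: modulo `4` the form on the coordinates with even elementary
divisor takes values in `{0, 2}` and is additive, so with two such coordinates it vanishes on one of
`e_j`, `e_k`, `e_j + e_k`. -/
lemma exists_enl_two {F : Matrix ι ι ℤ} (hF : PD F)
    (hd : (4 : ℤ) ∣ F.det) : ∃ x, Enl F 2 x := by
  classical
  obtain ⟨Y, Z, a, hY, hZ, h⟩ := exists_smith F hF.det_ne_zero
  by_cases hsq : ∃ i, ((2 : ℕ) : ℤ) ^ 2 ∣ a i
  · obtain ⟨i, hi⟩ := hsq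
    exact enl_of_sq_dvd hY h Nat.prime_two hi
  push Not at hsq
  have hI := pow_dvd_prod_card (Nat.prime_iff_prime_int.mp Nat.prime_two) a hsq
    (smith_det hZ h (d := ((2 : ℕ) : ℤ) ^ 2) (by simpa using hd))
  obtain ⟨j, hj, k, hk, hjk⟩ := Finset.one_lt_card.mp hI
  have hj := (Finset.mem_filter.mp hj).2
  have hk := (Finset.mem_filter.mp hk).2
  have e1 : ∀ i j, (Pi.single i 1 : ι → ℤ) ⬝ᵥ (Yᵀ * F * Y) *ᵥ Pi.single j 1
    = (Yᵀ * F * Y) i j := by intro i j; simp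
  have one : ∀ i, ((2 : ℕ) : ℤ) ∣ a i → ((2 : ℕ) : ℤ) ^ 2 ∣ (Yᵀ * F * Y) i i → ∃ x, Enl F 2 x := by
    intro i hi h4
    refine ⟨_, enl_of_coords hY h (t := Pi.single i 1) ⟨i, by simp⟩ (fun j => ?_) ?_⟩
    · by_cases hj : j = i
      · subst hj; simpa using hi
      · simp [hj]
    · rwa [e1]
  by_cases h1 : ((2 : ℕ) : ℤ) ^ 2 ∣ (Yᵀ * F * Y) j j
  · exact one j hj h1
  by_cases h2 : ((2 : ℕ) : ℤ) ^ 2 ∣ (Yᵀ * F * Y) k k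
  · exact one k hk h2
  refine ⟨_, enl_of_coords hY h (t := Pi.single j 1 + Pi.single k 1) ⟨j, by simp [hjk]⟩
    (fun l => ?_) ?_⟩
  · by_cases hlj : l = j
    · subst hlj; exact hj.mul_right _
    · by_cases hlk : l = k
      · subst hlk; exact hk.mul_right _
      · simp [hlj, hlk]
  · rw [Matrix.mulVec_add, dotProduct_add, add_dotProduct, add_dotProduct, e1, e1, e1, e1]
    have m1 := hj.trans (smith_gram_dvd h j j)
    have m2 := hk.trans (smith_gram_dvd h k k)
    have m3 := hk.trans (smith_gram_dvd h j k)
    have m4 : (Yᵀ * F * Y) k j = (Yᵀ * F * Y) j k := by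
      have : (Yᵀ * F * Y)ᵀ = Yᵀ * F * Y := by
        simp [Matrix.transpose_mul, hF.1, Matrix.mul_assoc]
      exact congrFun (congrFun this j) k
    rw [m4]
    push_cast at *
    omega

/-- Every lattice is contained in one without enlarging vectors at any prime. -/
lemma exists_maximal {F : Matrix ι ι ℤ} (hF : PD F) :
    ∃ F' P : Matrix ι ι ℤ, PD F' ∧ F = Pᵀ * F' * P ∧ ∀ p : ℕ, p.Prime → ∀ x, ¬ Enl F' p x := by
  induction hn : F.det.toNat using Nat.strong_induction_on generalizing F with
  | _ n ih =>
    by_cases h : ∃ p : ℕ, p.Prime ∧ ∃ x, Enl F p x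
    · obtain ⟨p, hp, x, hx⟩ := h
      obtain ⟨F₁, P, hF₁, hP, hd⟩ := hx.enlarge hF hp
      have h1 := hF₁.det_pos
      have hp2 : (4 : ℤ) ≤ (p : ℤ) ^ 2 := by
        have : (2 : ℤ) ≤ p := by exact_mod_cast hp.two_le
        nlinarith
      obtain ⟨F', Q, hF', hQ, hmax⟩ := ih F₁.det.toNat (by
        have : F₁.det < F.det := by nlinarith
        omega) hF₁ rfl
      exact ⟨F', Q * P, hF', by
        rw [hP, hQ, Matrix.transpose_mul]; simp only [Matrix.mul_assoc], hmax⟩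
    · push Not at h
      exact ⟨F, 1, hF, by simp, h⟩

/-- A lattice of determinant a power of `2` is contained in one of determinant `1` or `2`. -/
lemma exists_det_le_two {F : Matrix ι ι ℤ} (hF : PD F) {k : ℕ} (hk : F.det = 2 ^ k) :
    ∃ F' P : Matrix ι ι ℤ, PD F' ∧ F = Pᵀ * F' * P ∧ (F'.det = 1 ∨ F'.det = 2) := by
  induction k using Nat.strong_induction_on generalizing F with
  | _ k ih =>
    by_cases h : 2 ≤ k
    · obtain ⟨x, hx⟩ := exists_enl_two hF (by
        rw [hk]; exact (pow_dvd_pow 2 h : (2 : ℤ) ^ 2 ∣ 2 ^ k))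
      obtain ⟨F₁, P, hF₁, hP, hd⟩ := hx.enlarge hF Nat.prime_two
      obtain ⟨F', Q, hF', hQ, hmax⟩ := ih (k - 2) (by omega) hF₁ (by
        rw [hk] at hd
        have : (2 : ℤ) ^ k = 2 ^ (k - 2) * 2 ^ 2 := by rw [← pow_add]; congr 1; omega
        rw [this] at hd
        push_cast at hd
        linarith)
      exact ⟨F', Q * P, hF', by
        rw [hP, hQ, Matrix.transpose_mul]; simp only [Matrix.mul_assoc], hmax⟩
    · refine ⟨F, 1, hF, by simp, ?_⟩
      have : k = 0 ∨ k = 1 := by omega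
      rcases this with rfl | rfl <;> simp [hk]

end smith

/-! ### Values of quadratic forms modulo primes, and primes in progressions -/

section quad

variable {ι : Type} [Fintype ι] [DecidableEq ι]

lemma symm_dot {A : Matrix ι ι ℤ} (hA : Aᵀ = A) (x y : ι → ℤ) :
    x ⬝ᵥ A *ᵥ y = y ⬝ᵥ A *ᵥ x := by
  rw [Matrix.dotProduct_mulVec, ← Matrix.mulVec_transpose, hA, dotProduct_comm]

/-- If `d` is odd and some entry of `A` is not divisible by `d`, some value of the form is not
(polarisation). -/
lemma exists_quad_not_dvd {A : Matrix ι ι ℤ} (hA : Aᵀ = A) {d : ℤ} (hd : IsCoprime d 2)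
    {i j : ι} (h : ¬ d ∣ A i j) : ∃ c : ι → ℤ, ¬ d ∣ c ⬝ᵥ A *ᵥ c := by
  by_contra hne
  push Not at hne
  have h1 := hne (Pi.single i 1)
  have h2 := hne (Pi.single j 1)
  have h3 := hne (Pi.single i 1 + Pi.single j 1)
  rw [Matrix.mulVec_add, dotProduct_add, add_dotProduct, add_dotProduct,
    symm_dot hA (Pi.single j 1) (Pi.single i 1)] at h3
  have e : ∀ i j, (Pi.single i 1 : ι → ℤ) ⬝ᵥ A *ᵥ Pi.single j 1 = A i j := by
    intro i j; simp
  simp only [e] at h1 h2 h3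
  have h4 : d ∣ 2 * A i j := by
    have := dvd_sub (dvd_sub h3 h1) h2
    rwa [show A i i + A i j + (A i j + A j j) - A i i - A j j = 2 * A i j by ring] at this
  exact h (hd.dvd_of_dvd_mul_left h4)

lemma quad_add_smul {A : Matrix ι ι ℤ} (hA : Aᵀ = A) (d : ℤ) (c w : ι → ℤ) :
    d ∣ (c + d • w) ⬝ᵥ A *ᵥ (c + d • w) - c ⬝ᵥ A *ᵥ c := by
  refine ⟨2 * (c ⬝ᵥ A *ᵥ w) + d * (w ⬝ᵥ A *ᵥ w), ?_⟩
  rw [Matrix.mulVec_add, Matrix.mulVec_smul, dotProduct_add, add_dotProduct, add_dotProduct,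
    smul_dotProduct, dotProduct_smul, smul_dotProduct, dotProduct_smul, symm_dot hA w c]
  simp only [smul_eq_mul]
  ring

/-- Chinese remainder theorem: if for each of several pairwise coprime moduli some value of the form
is not divisible by it, then one value is divisible by none of them. -/
lemma exists_quad_crt {A : Matrix ι ι ℤ} (hA : Aᵀ = A) (d : ℕ → ℤ) (S : Finset ℕ)
    (hS : ∀ p ∈ S, ∀ q ∈ S, p ≠ q → IsCoprime (d p) (d q))
    (h : ∀ p ∈ S, ∃ c : ι → ℤ, ¬ d p ∣ c ⬝ᵥ A *ᵥ c) :
    ∃ c : ι → ℤ, ∀ p ∈ S, ¬ d p ∣ c ⬝ᵥ A *ᵥ c := by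
  induction S using Finset.induction_on with
  | empty => exact ⟨0, by simp⟩
  | insert p S hp ih =>
    obtain ⟨c, hc⟩ := ih (fun q hq q' hq' => hS q (Finset.mem_insert_of_mem hq) q'
      (Finset.mem_insert_of_mem hq')) (fun q hq => h q (Finset.mem_insert_of_mem hq))
    obtain ⟨c', hc'⟩ := h p (Finset.mem_insert_self _ _)
    have hcop : IsCoprime (d p) (∏ q ∈ S, d q) := IsCoprime.prod_right fun q hq =>
      hS p (Finset.mem_insert_self _ _) q (Finset.mem_insert_of_mem hq) (by rintro rfl; exact hp hq)
    obtain ⟨u, v, huv⟩ := hcop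
    set D := ∏ q ∈ S, d q with hD
    refine ⟨(u * d p) • c + (v * D) • c', fun q hq hdvd => ?_⟩
    rcases Finset.mem_insert.mp hq with rfl | hq
    · apply hc'
      have e : (u * d q) • c + (v * D) • c' = c' + d q • (u • (c - c')) := by
        have : v * D = 1 - u * d q := by linarith
        rw [this]; ext i; simp; ring
      rw [e] at hdvd
      exact (dvd_iff_dvd_of_dvd_sub (quad_add_smul hA _ _ _)).mp hdvd
    · apply hc q hq
      obtain ⟨D', hD'⟩ := Finset.dvd_prod_of_mem d hq
      have e : (u * d p) • c + (v * D) • c' = c + d q • ((v * D') • (c' - c)) := by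
        have h1 : u * d p = 1 - v * D := by linarith
        have h2 : D = d q * D' := by rw [hD, hD']
        rw [h1, h2]; ext i; simp; ring
      rw [e] at hdvd
      exact (dvd_iff_dvd_of_dvd_sub (quad_add_smul hA _ _ _)).mp hdvd

lemma pow_card_dvd_det {A : Matrix ι ι ℤ} {d : ℤ} (h : ∀ i j, d ∣ A i j) :
    d ^ Fintype.card ι ∣ A.det := by
  choose A' hA' using h
  have : A = d • Matrix.of A' := by ext i j; simp [hA']
  rw [this, Matrix.det_smul]
  exact Dvd.intro _ rfl

/-- Dirichlet's theorem with prescribed residues modulo an odd `m` and modulo `4`. -/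
lemma exists_prime_crt {m : ℕ} (hm : Odd m) {u : ℤ} (hu : IsCoprime u m) {r : ℤ} (hr : Odd r)
    (n : ℕ) : ∃ l : ℕ, l.Prime ∧ n < l ∧ (m : ℤ) ∣ l - u ∧ (4 : ℤ) ∣ l - r := by
  have hm4 : IsCoprime (m : ℤ) 4 := by
    have : Nat.Coprime m 4 := by
      have : Nat.Coprime m 2 := (Nat.coprime_two_right).mpr hm
      exact (Nat.Coprime.pow_right 2 this)
    exact_mod_cast Nat.isCoprime_iff_coprime.mpr this
  obtain ⟨s, t, hst⟩ := id hm4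
  set w : ℤ := s * m * r + t * 4 * u with hw
  have hw1 : (m : ℤ) ∣ w - u := ⟨s * (r - u), by
    rw [hw]; have : t * 4 = 1 - s * m := by linarith
    rw [this]; ring⟩
  have hw2 : (4 : ℤ) ∣ w - r := ⟨t * (u - r), by
    rw [hw]; have : s * m = 1 - t * 4 := by linarith
    rw [this]; ring⟩
  have hcop : IsCoprime w ((m * 4 : ℕ) : ℤ) := by
    push_cast
    refine IsCoprime.mul_right ?_ ?_
    · obtain ⟨k, hk⟩ := hw1
      have : w = u + m * k := by linarith
      rw [this]; exact IsCoprime.add_mul_left_left hu k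
    · obtain ⟨k, hk⟩ := hw2
      have : w = r + 4 * k := by linarith
      rw [this]
      refine IsCoprime.add_mul_left_left ?_ k
      obtain ⟨j, rfl⟩ := hr
      exact (show IsCoprime (2 * j + 1) ((2 : ℤ) ^ 2) from
        IsCoprime.pow_right ⟨1, -j, by ring⟩)
  have hne : NeZero (m * 4) := ⟨by have := hm.pos; omega⟩
  have hunit : IsUnit ((w : ℤ) : ZMod (m * 4)) := by
    rw [ZMod.coe_int_isUnit_iff_isCoprime]; exact hcop.symm
  obtain ⟨l, hl, hlp, hlw⟩ := Nat.forall_exists_prime_gt_and_eq_mod hunit n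
  have hd : ((m * 4 : ℕ) : ℤ) ∣ l - w := by
    rw [← ZMod.intCast_zmod_eq_zero_iff_dvd]
    push_cast
    rw [hlw]; simp
  refine ⟨l, hlp, hl, ?_, ?_⟩
  · have h1 : (m : ℤ) ∣ l - w := (Dvd.intro _ (by push_cast; rfl)).trans hd
    have := dvd_add h1 hw1
    simpa using this
  · have h1 : (4 : ℤ) ∣ l - w := (Dvd.intro_left (m : ℤ) (by push_cast; rfl)).trans hd
    have := dvd_add h1 hw2
    simpa using this

end quad

/-! ### Embedding a maximal quaternary lattice in a unimodular one of rank seven -/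

lemma adj_symm {ι : Type} [Fintype ι] [DecidableEq ι] {F : Matrix ι ι ℤ} (hF : PD F) :
    F.adjugateᵀ = F.adjugate := by rw [Matrix.adjugate_transpose, hF.1]

/-- A maximal quaternary lattice extends to rank five with squarefree determinant `N ≡ 1 (mod 4)`.
Bordering with corner `B` and row `c` gives determinant `δB - a` with `δ = det F`,
`a = c · adj(F) c`. The row `c` is chosen so that `g = gcd(δ, a)` is odd and squarefree; writing
`δ = g δ₁`, `a = g a₁`, the determinant is `g l` for a prime `l ≡ -a₁ (mod δ₁)`, `l ≡ g (mod 4)`. -/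
lemma exists_bord_five {F : Matrix (Fin 4) (Fin 4) ℤ} (hF : PD F)
    (hmax : ∀ p : ℕ, p.Prime → ∀ x, ¬ Enl F p x) :
    ∃ (B : ℤ) (c : Fin 4 → ℤ) (N : ℕ), (bord B c F).det = N ∧ Squarefree N ∧ N % 4 = 1 := by
  obtain ⟨δ, hδ⟩ : ∃ δ : ℕ, F.det = δ := ⟨F.det.toNat, (Int.toNat_of_nonneg hF.det_pos.le).symm⟩
  have hδ0 : 0 < δ := by have := hF.det_pos; rw [hδ] at this; exact_mod_cast this
  have hA := adj_symm hF
  set A := F.adjugate with hAdef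
  have hAdet : A.det = (δ : ℤ) ^ 3 := by rw [hAdef, Matrix.det_adjugate, hδ]; rfl
  have hodd : ∀ p : ℕ, p.Prime → ¬ (p : ℤ) ^ 3 ∣ δ := by
    intro p hp hd
    obtain ⟨x, hx⟩ := exists_enl_of_cube_dvd hF hp (hδ ▸ hd)
    exact hmax p hp x hx
  have h4 : ¬ (4 : ℤ) ∣ δ := by
    intro hd
    obtain ⟨x, hx⟩ := exists_enl_two hF (hδ ▸ hd)
    exact hmax 2 Nat.prime_two x hx
  set d : ℕ → ℤ := fun p => if p = 2 then 2 else (p : ℤ) ^ 2 with hd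
  obtain ⟨c, hc⟩ : ∃ c : Fin 4 → ℤ, ∀ p ∈ δ.primeFactors, ¬ d p ∣ c ⬝ᵥ A *ᵥ c := by
    refine exists_quad_crt hA d _ ?_ ?_
    · intro p hp q hq hpq
      have hp := Nat.prime_of_mem_primeFactors hp
      have hq := Nat.prime_of_mem_primeFactors hq
      have : IsCoprime (p : ℤ) q := Nat.isCoprime_iff_coprime.mpr ((Nat.coprime_primes hp hq).mpr hpq)
      simp only [hd]
      split_ifs with h1 h2 h2
      · omega
      · subst h1; exact this.pow_right
      · subst h2; exact this.pow_left
      · exact this.pow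
    · intro p hp
      have hpδ := Nat.dvd_of_mem_primeFactors hp
      have hp := Nat.prime_of_mem_primeFactors hp
      have hpp : Prime (p : ℤ) := Nat.prime_iff_prime_int.mp hp
      by_cases h2 : p = 2
      · subst h2
        simp only [hd, if_true]
        by_contra hne
        push Not at hne
        -- otherwise a column of the adjugate is an enlarging vector at `2`
        have hcol : ∃ i j, ¬ (2 : ℤ) ∣ A i j := by
          by_contra hall
          push Not at hall
          have := pow_card_dvd_det hall
          rw [hAdet, Fintype.card_fin] at this
          obtain ⟨m, rfl⟩ := hpδ
          have hm : ¬ (2 : ℤ) ∣ m := by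
            intro h; apply h4
            push_cast
            exact (mul_dvd_mul_left 2 h : (2 : ℤ) * 2 ∣ 2 * m)
          have h3 : (2 : ℤ) ∣ (m : ℤ) ^ 3 := by
            push_cast at this
            rw [mul_pow] at this
            omega
          exact hm (Int.prime_two.dvd_of_dvd_pow h3)
        obtain ⟨i, j, hij⟩ := hcol
        have hFA : F *ᵥ (A *ᵥ Pi.single j 1) = (δ : ℤ) • Pi.single j 1 := by
          rw [Matrix.mulVec_mulVec, hAdef, Matrix.mul_adjugate, Matrix.smul_mulVec,
            Matrix.one_mulVec, hδ]
        refine hmax 2 Nat.prime_two (A *ᵥ Pi.single j 1) ⟨⟨i, by simpa using hij⟩, ?_, ?_⟩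
        · intro k
          rw [hFA, Pi.smul_apply, smul_eq_mul]
          exact Dvd.dvd.mul_right (by exact_mod_cast hpδ) _
        · rw [hFA, dotProduct_smul, smul_eq_mul, sq]
          refine mul_dvd_mul (by exact_mod_cast hpδ) ?_
          have := hne (Pi.single j 1)
          rwa [dotProduct_comm] at this
      · simp only [hd, h2, if_false]
        have hcop : IsCoprime ((p : ℤ) ^ 2) 2 := by
          have : Nat.Coprime p 2 := (Nat.coprime_primes hp Nat.prime_two).mpr h2
          exact IsCoprime.pow_left (by exact_mod_cast Nat.isCoprime_iff_coprime.mpr this)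
        have hcol : ∃ i j, ¬ (p : ℤ) ^ 2 ∣ A i j := by
          by_contra hall
          push Not at hall
          have := pow_card_dvd_det hall
          rw [hAdet, Fintype.card_fin] at this
          -- `p ^ 8 ∣ δ ^ 3` while `δ = p * m` or `δ = p ^ 2 * m` with `p ∤ m`
          obtain ⟨k, m, hm, hkm⟩ := Nat.exists_eq_pow_mul_and_not_dvd hδ0.ne' p hp.ne_one
          have hk : k ≤ 2 := by
            by_contra hk
            apply hodd p hp
            rw [hkm]; push_cast
            exact (pow_dvd_pow _ (by omega)).mul_right _
          have h8 : (p : ℤ) ^ (3 * k) * (p : ℤ) ^ 1 ∣ (p : ℤ) ^ (3 * k) * (m : ℤ) ^ 3 := by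
            rw [hkm] at this; push_cast at this
            rw [← pow_add]
            have e : ((p : ℤ) ^ k * m) ^ 3 = (p : ℤ) ^ (3 * k) * (m : ℤ) ^ 3 := by ring
            rw [e] at this
            refine (pow_dvd_pow _ ?_).trans ((dvd_of_eq (pow_mul _ _ _)).trans this)
            omega
          have h9 := (mul_dvd_mul_iff_left (pow_ne_zero _ hpp.ne_zero)).mp h8
          rw [pow_one] at h9
          exact hm (by exact_mod_cast hpp.dvd_of_dvd_pow h9)
        obtain ⟨i, j, hij⟩ := hcol
        exact exists_quad_not_dvd hA hcop hij
  set a := c ⬝ᵥ A *ᵥ c with ha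
  set g := Int.gcd δ a with hg
  have hgδ : (g : ℤ) ∣ δ := Int.gcd_dvd_left _ _
  have hga : (g : ℤ) ∣ a := Int.gcd_dvd_right _ _
  have hg0 : 0 < g := Int.gcd_pos_of_ne_zero_left _ (by exact_mod_cast hδ0.ne')
  have hgodd : Odd g := by
    rw [← Nat.not_even_iff_odd, even_iff_two_dvd]
    intro h
    have h2 : 2 ∣ δ := h.trans (by exact_mod_cast hgδ)
    have := hc 2 (Nat.mem_primeFactors.mpr ⟨Nat.prime_two, h2, hδ0.ne'⟩)
    simp only [hd, if_true] at this
    exact this ((by exact_mod_cast h : (2 : ℤ) ∣ g).trans hga)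
  have hgsq : Squarefree g := by
    rw [Nat.squarefree_iff_prime_squarefree]
    intro p hp h
    have hpδ : p ∣ δ := (Dvd.intro _ rfl).trans (h.trans (by exact_mod_cast hgδ))
    have := hc p (Nat.mem_primeFactors.mpr ⟨hp, hpδ, hδ0.ne'⟩)
    have hp2 : p ≠ 2 := by
      rintro rfl
      exact (Nat.not_even_iff_odd.mpr hgodd) (even_iff_two_dvd.mpr ((Dvd.intro _ rfl).trans h))
    simp only [hd, hp2, if_false] at this
    apply this
    rw [sq]
    exact (by exact_mod_cast h : (p : ℤ) * p ∣ g).trans hga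
  obtain ⟨δ₁, hδ₁⟩ : ∃ δ₁ : ℕ, δ = g * δ₁ := by exact_mod_cast hgδ
  obtain ⟨a₁, ha₁⟩ := hga
  have hcop : IsCoprime (δ₁ : ℤ) a₁ := by
    rw [Int.isCoprime_iff_gcd_eq_one]
    have : g = g * Int.gcd δ₁ a₁ := by
      conv_lhs => rw [hg, hδ₁, ha₁]
      push_cast
      rw [Int.gcd_mul_left]; simp
    exact (Nat.eq_of_mul_eq_mul_left hg0 (by omega)).symm
  -- the part of `δ₁` prime to `2`
  obtain ⟨δ₂, h2δ, hodd2⟩ : ∃ δ₂ : ℕ, (δ₁ = δ₂ ∨ δ₁ = 2 * δ₂) ∧ Odd δ₂ := by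
    rcases Nat.even_or_odd δ₁ with h | h
    · obtain ⟨m, hm⟩ := even_iff_two_dvd.mp h
      refine ⟨m, Or.inr hm, ?_⟩
      rw [← Nat.not_even_iff_odd, even_iff_two_dvd]
      rintro ⟨k, hk⟩
      apply h4
      rw [hδ₁, hm, hk]
      exact ⟨g * k, by push_cast; ring⟩
    · exact ⟨δ₁, Or.inl rfl, h⟩
  have hcop2 : IsCoprime (-a₁) (δ₂ : ℤ) := by
    refine IsCoprime.neg_left (hcop.of_isCoprime_of_dvd_left ?_).symm
    rcases h2δ with h | h
    · exact dvd_of_eq (by rw [h])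
    · exact Dvd.intro_left 2 (by rw [h]; push_cast; rfl)
  obtain ⟨l, hl, hlδ, hl1, hl2⟩ := exists_prime_crt hodd2 hcop2 (r := g) (by exact_mod_cast hgodd) δ
  have hlodd : l % 2 = 1 := by
    obtain ⟨k, hk⟩ := hgodd
    omega
  have hdvd : (δ₁ : ℤ) ∣ l + a₁ := by
    rw [sub_neg_eq_add] at hl1
    rcases h2δ with h | h
    · rw [h]; exact hl1
    · rw [h]; push_cast
      refine IsCoprime.mul_dvd ?_ ?_ hl1
      · have := (Nat.coprime_two_left).mpr hodd2
        exact_mod_cast Nat.isCoprime_iff_coprime.mpr this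
      · have : a₁ % 2 = 1 := by
          rw [h] at hcop; push_cast at hcop
          have h3 : ¬ (2 : ℤ) ∣ a₁ := by
            intro h4
            have := (hcop.of_mul_left_left).isUnit_of_dvd' dvd_rfl h4
            revert this; decide
          omega
        omega
  obtain ⟨B, hB⟩ := hdvd
  refine ⟨B, c, g * l, ?_, ?_, ?_⟩
  · rw [bord_det _ _ hF.det_ne_zero, ← hAdef, ← ha, hδ, ha₁, hδ₁]
    push_cast
    have : (l : ℤ) = δ₁ * B - a₁ := by linarith
    rw [this]; ring
  · rw [Nat.squarefree_mul_iff]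
    refine ⟨?_, hgsq, hl.squarefree⟩
    rw [Nat.coprime_comm, hl.coprime_iff_not_dvd]
    intro h
    have h5 := Nat.le_of_dvd hg0 h
    have h6 : g ≤ δ := Nat.le_of_dvd hδ0 (by exact_mod_cast hgδ)
    omega
  · obtain ⟨k, hk⟩ := hl2
    have h5 : (l : ℤ) = g + 4 * k := by linarith
    have h6 : ((g * l : ℕ) : ℤ) % 4 = 1 := by
      obtain ⟨j, hj⟩ := hgodd
      push_cast
      rw [h5, hj]; push_cast
      have : (2 * (j : ℤ) + 1) * (2 * j + 1 + 4 * k) = 1 + 4 * (j ^ 2 + j + k * (2 * j + 1)) := by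
        ring
      rw [this]; omega
    omega

/-- A further bordering makes the determinant a prime `e` for which `-N` is a square modulo `e`; this
is stated as `e ∣ 1 + x²N`. Here `e ≡ -a (mod N)` with `a = c · adj(G) c` prime to `N`; since
`N ≡ 1 (mod 4)`, reciprocity gives `(-N / e) = χ₄(e) (-a / N)`, and `e` modulo `4` is chosen to make
this `1`. -/
lemma exists_bord_six {ι : Type} [Fintype ι] [DecidableEq ι] {G : Matrix ι ι ℤ} (hG : PD G)
    (hι : Fintype.card ι = 5) {N : ℕ} (hd : G.det = N) (hN : Squarefree N) (hN4 : N % 4 = 1) :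
    ∃ (B : ℤ) (c : ι → ℤ) (e : ℕ) (x : ℤ), (bord B c G).det = e ∧ 0 < e ∧ (e : ℤ) ∣ 1 + x ^ 2 * N := by
  have hA := adj_symm hG
  set A := G.adjugate with hAdef
  have hAdet : A.det = (N : ℤ) ^ 4 := by rw [hAdef, Matrix.det_adjugate, hd, hι]
  have hN0 : N ≠ 0 := by rintro rfl; simp at hN4
  have hNodd : Odd N := Nat.odd_iff.mpr (by omega)
  obtain ⟨c, hc⟩ : ∃ c : ι → ℤ, ∀ p ∈ N.primeFactors, ¬ (p : ℤ) ∣ c ⬝ᵥ A *ᵥ c := by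
    refine exists_quad_crt hA (fun p => (p : ℤ)) _ ?_ ?_
    · intro p hp q hq hpq
      exact Nat.isCoprime_iff_coprime.mpr ((Nat.coprime_primes (Nat.prime_of_mem_primeFactors hp)
        (Nat.prime_of_mem_primeFactors hq)).mpr hpq)
    · intro p hp
      have hpN := Nat.dvd_of_mem_primeFactors hp
      have hp := Nat.prime_of_mem_primeFactors hp
      have hpp : Prime (p : ℤ) := Nat.prime_iff_prime_int.mp hp
      have hp2 : p ≠ 2 := by rintro rfl; omega
      have hcop : IsCoprime (p : ℤ) 2 := by
        have : Nat.Coprime p 2 := (Nat.coprime_primes hp Nat.prime_two).mpr hp2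
        exact_mod_cast Nat.isCoprime_iff_coprime.mpr this
      have hcol : ∃ i j, ¬ (p : ℤ) ∣ A i j := by
        by_contra hall
        push Not at hall
        have := pow_card_dvd_det hall
        rw [hAdet, hι] at this
        obtain ⟨m, hm'⟩ := hpN
        rw [hm'] at this hN
        have hm : ¬ (p : ℤ) ∣ m := by
          intro h
          have h' : p ∣ m := by exact_mod_cast h
          exact hp.ne_one (Nat.isUnit_iff.mp (hN p (Nat.mul_dvd_mul_left p h')))
        have h3 : (p : ℤ) ∣ (m : ℤ) ^ 4 := by
          push_cast at this
          rw [mul_pow, pow_succ (p : ℤ) 4] at this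
          exact (mul_dvd_mul_iff_left (pow_ne_zero _ hpp.ne_zero)).mp this
        exact hm (hpp.dvd_of_dvd_pow h3)
      obtain ⟨i, j, hij⟩ := hcol
      exact exists_quad_not_dvd hA hcop hij
  set a := c ⬝ᵥ A *ᵥ c with ha
  have hcop : IsCoprime (-a) (N : ℤ) := by
    refine IsCoprime.neg_left ?_
    rw [Int.isCoprime_iff_gcd_eq_one]
    by_contra hne
    obtain ⟨p, hp, hpg⟩ := Nat.exists_prime_and_dvd hne
    have h1 : (p : ℤ) ∣ a := (Int.natCast_dvd_natCast.mpr hpg).trans (Int.gcd_dvd_left _ _)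
    have h2 : (p : ℤ) ∣ N := (Int.natCast_dvd_natCast.mpr hpg).trans (Int.gcd_dvd_right _ _)
    exact hc p (Nat.mem_primeFactors.mpr ⟨hp, by exact_mod_cast h2, hN0⟩) h1
  have hJ : jacobiSym (-a) N = 1 ∨ jacobiSym (-a) N = -1 :=
    jacobiSym.eq_one_or_neg_one (Int.isCoprime_iff_gcd_eq_one.mp hcop)
  obtain ⟨r, hr⟩ : ∃ r : ℤ, (r = 1 ∧ jacobiSym (-a) N = 1) ∨ (r = 3 ∧ jacobiSym (-a) N = -1) := by
    rcases hJ with h | h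
    · exact ⟨1, Or.inl ⟨rfl, h⟩⟩
    · exact ⟨3, Or.inr ⟨rfl, h⟩⟩
  obtain ⟨e, he, heN, he1, he2⟩ := exists_prime_crt hNodd hcop (r := r)
    (by rcases hr with ⟨rfl, -⟩ | ⟨rfl, -⟩ <;> decide) N
  have : Fact e.Prime := ⟨he⟩
  have heodd : Odd e := by
    rw [Nat.odd_iff]
    rcases hr with ⟨rfl, -⟩ | ⟨rfl, -⟩ <;> omega
  have hJe : jacobiSym e N = jacobiSym (-a) N := by
    refine jacobiSym.mod_left' ?_
    exact (Int.modEq_iff_dvd.mpr he1).symm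
  have hleg : legendreSym e (-(N : ℤ)) = 1 := by
    rw [jacobiSym.legendreSym.to_jacobiSym, jacobiSym.neg _ heodd,
      jacobiSym.quadratic_reciprocity_one_mod_four hN4 heodd, hJe]
    rcases hr with ⟨rfl, h⟩ | ⟨rfl, h⟩
    · rw [h, ZMod.χ₄_nat_one_mod_four (by omega)]; rfl
    · rw [h, ZMod.χ₄_nat_three_mod_four (by omega)]; rfl
  have hN0e : ((-(N : ℤ) : ℤ) : ZMod e) ≠ 0 := by
    rw [Ne, ZMod.intCast_zmod_eq_zero_iff_dvd, dvd_neg]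
    intro h
    have := Nat.le_of_dvd (Nat.pos_of_ne_zero hN0) (by exact_mod_cast h)
    omega
  obtain ⟨y, hy⟩ := (legendreSym.eq_one_iff e hN0e).mp hleg
  have hy0 : y ≠ 0 := by rintro rfl; simp at hy; simp [hy] at hN0e
  obtain ⟨k, hk⟩ := he1
  refine ⟨k, c, e, ((y⁻¹).val : ℤ), ?_, he.pos, ?_⟩
  · rw [bord_det _ _ hG.det_ne_zero, ← hAdef, ← ha, hd, ← hk]; ring
  · rw [← ZMod.intCast_zmod_eq_zero_iff_dvd]
    push_cast
    have : (N : ZMod e) = - (y * y) := by rw [← hy]; push_cast; ring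
    rw [ZMod.natCast_zmod_val, this]
    field_simp
    ring

/-- A positive definite quaternary form without enlarging vectors is the restriction of a positive
definite unimodular form in seven variables. The third bordering has the row `(x, 0, …, 0)` and the
corner `k = (1 + x²N) / e`, so its determinant is `ek - x²N = 1`. -/
lemma exists_unimodular {F : Matrix (Fin 4) (Fin 4) ℤ} (hF : PD F)
    (hmax : ∀ p : ℕ, p.Prime → ∀ x, ¬ Enl F p x) :
    ∃ (G : Matrix (Unit ⊕ Unit ⊕ Unit ⊕ Fin 4) (Unit ⊕ Unit ⊕ Unit ⊕ Fin 4) ℤ), PD G ∧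
      G.det = 1 ∧ ∀ i j, G (Sum.inr (Sum.inr (Sum.inr i))) (Sum.inr (Sum.inr (Sum.inr j))) =
        F i j := by
  obtain ⟨B, c, N, hN, hsq, h4⟩ := exists_bord_five hF hmax
  have hN0 : 0 < N := Nat.pos_of_ne_zero (by rintro rfl; simp at h4)
  have h5 : PD (bord B c F) := hF.bord hF.det_pos (by rw [hN]; exact_mod_cast hN0)
  obtain ⟨B', c', e, x, he, he0, k, hk⟩ := exists_bord_six h5 (by simp) hN hsq h4
  have h6 : PD (bord B' c' (bord B c F)) := h5.bord h5.det_pos (by rw [he]; exact_mod_cast he0)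
  have hdet : (bord k (Pi.single (Sum.inl ()) x) (bord B' c' (bord B c F))).det = 1 := by
    rw [bord_det _ _ h6.det_ne_zero, he, ← hk]
    have := bord_adjugate B' c' (bord B c F)
    rw [hN] at this
    simp [this]; ring
  exact ⟨bord k (Pi.single (Sum.inl ()) x) (bord B' c' (bord B c F)),
    h6.bord h6.det_pos (by rw [hdet]; norm_num), hdet, fun _ _ => rfl⟩

/-! ### Hermite's inequality -/

section val

variable {ι κ : Type} [Fintype ι] [DecidableEq ι] [Fintype κ] [DecidableEq κ]

/-- `t` is the value of `G` at a vector that belongs to a basis of the lattice. -/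
def BasisVal (G : Matrix ι ι ℤ) (t : ℤ) : Prop :=
  ∃ U : Matrix ι ι ℤ, IsUnit U.det ∧ ∃ i, (Uᵀ * G * U) i i = t

lemma BasisVal.of_conj {G U : Matrix ι ι ℤ} (hU : IsUnit U.det) {t : ℤ}
    (h : BasisVal (Uᵀ * G * U) t) : BasisVal G t := by
  obtain ⟨V, hV, i, hi⟩ := h
  refine ⟨U * V, by rw [Matrix.det_mul]; exact hU.mul hV, i, ?_⟩
  rw [← hi, Matrix.transpose_mul]
  simp only [Matrix.mul_assoc]

lemma BasisVal.of_reindex {G : Matrix ι ι ℤ} (e : ι ≃ κ) {t : ℤ}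
    (h : BasisVal (G.submatrix e.symm e.symm) t) : BasisVal G t := by
  obtain ⟨V, hV, i, hi⟩ := h
  refine ⟨V.submatrix e e, by rwa [Matrix.det_submatrix_equiv_self], e.symm i, ?_⟩
  rw [← hi]
  have : G = (G.submatrix e.symm e.symm).submatrix e e := by ext; simp
  conv_lhs => rw [this]
  rw [Matrix.transpose_submatrix, Matrix.submatrix_mul_equiv, Matrix.submatrix_mul_equiv]
  simp

lemma conj_diag (G U : Matrix ι ι ℤ) (i : ι) :
    (Uᵀ * G * U) i i = (U *ᵥ Pi.single i 1) ⬝ᵥ G *ᵥ (U *ᵥ Pi.single i 1) := by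
  rw [← dot_conj]; simp

lemma BasisVal.pos {G : Matrix ι ι ℤ} (hG : PD G) {t : ℤ} (h : BasisVal G t) : 0 < t := by
  obtain ⟨U, hU, i, rfl⟩ := h
  exact (hG.conj hU.ne_zero).diag_pos i

lemma exists_min_basisVal [Nonempty ι] {G : Matrix ι ι ℤ} (hG : PD G) :
    ∃ t, BasisVal G t ∧ ∀ s, BasisVal G s → t ≤ s := by
  classical
  have hex : ∃ n : ℕ, BasisVal G n := by
    refine ⟨(G (Classical.arbitrary ι) (Classical.arbitrary ι)).toNat, 1, by simp,
      Classical.arbitrary ι, ?_⟩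
    rw [Int.toNat_of_nonneg (hG.diag_pos _).le]; simp
  refine ⟨(Nat.find hex : ℕ), Nat.find_spec hex, fun s hs => ?_⟩
  have h0 := hs.pos hG
  have := Nat.find_min' hex (m := s.toNat) (by rwa [Int.toNat_of_nonneg h0.le])
  omega

end val

/-- An equivalence splitting off a given index. -/
def splitEquiv {n : ℕ} (i : Fin (n + 1)) : Fin (n + 1) ≃ Unit ⊕ Fin n :=
  (finSuccEquiv' i).trans ((Equiv.optionEquivSumPUnit (Fin n)).trans (Equiv.sumComm _ _))

lemma splitEquiv_symm_inl {n : ℕ} (i : Fin (n + 1)) : (splitEquiv i).symm (Sum.inl ()) = i := by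
  simp [splitEquiv]

/-- A vector belonging to a basis can be moved to the corner of the Gram matrix by a unimodular change
of variables and a reindexing. -/
lemma BasisVal.split {n : ℕ} {G : Matrix (Fin (n + 1)) (Fin (n + 1)) ℤ} (hG : PD G) {t : ℤ}
    (h : BasisVal G t) : ∃ (U : Matrix (Fin (n + 1)) (Fin (n + 1)) ℤ) (e : Fin (n + 1) ≃ Unit ⊕ Fin n)
      (b : Fin n → ℤ) (G₀ : Matrix (Fin n) (Fin n) ℤ), IsUnit U.det ∧
      (Uᵀ * G * U).submatrix e.symm e.symm = bord t b G₀ ∧ PD (bord t b G₀) := by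
  obtain ⟨U, hU, i, hi⟩ := h
  have h1 := ((hG.conj hU.ne_zero).reindex (splitEquiv i))
  have h2 := schur_fromEntries _ h1.1
  have h3 : ((Uᵀ * G * U).submatrix (splitEquiv i).symm (splitEquiv i).symm) (Sum.inl ()) (Sum.inl ())
    = t := by rw [Matrix.submatrix_apply, splitEquiv_symm_inl, hi]
  rw [h3] at h2
  exact ⟨U, splitEquiv i, _, _, hU, h2, h2 ▸ h1⟩

lemma det_conj_unit {ι : Type} [Fintype ι] [DecidableEq ι] {G U : Matrix ι ι ℤ}
    (hU : IsUnit U.det) : (Uᵀ * G * U).det = G.det := by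
  rw [Matrix.det_mul, Matrix.det_mul, Matrix.det_transpose]
  have : U.det * U.det = 1 := Int.isUnit_mul_self hU
  linear_combination G.det * this

/-- Rounding `-b / t` to the nearest integer. -/
lemma exists_round {t : ℤ} (ht : 0 < t) (b : ℤ) : ∃ m : ℤ, 4 * (t * m + b) ^ 2 ≤ t ^ 2 := by
  refine ⟨-((2 * b + t) / (2 * t)), ?_⟩
  have h1 := Int.emod_add_mul_ediv (2 * b + t) (2 * t)
  have h2 := Int.emod_nonneg (2 * b + t) (by omega : 2 * t ≠ 0)
  have h3 := Int.emod_lt_of_pos (2 * b + t) (by omega : 0 < 2 * t)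
  set k := (2 * b + t) / (2 * t)
  have h4 : 2 * (t * -k + b) = (2 * b + t) % (2 * t) - t := by linarith
  have h5 : 4 * (t * -k + b) ^ 2 = (2 * (t * -k + b)) ^ 2 := by ring
  rw [h5, h4]
  nlinarith

/-- Hermite's inequality: in dimension `n + 1` some basis vector has value `t` with
`(3/4)^(n(n+1)/2) t^(n+1) ≤ det G`. The minimal basis value `t` satisfies `3t² ≤ 4s` for every basis
value `s` of the scaled Schur complement, and induction applies to the latter. -/
lemma hermite : ∀ (n : ℕ) (G : Matrix (Fin (n + 1)) (Fin (n + 1)) ℤ), PD G →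
    ∃ t, BasisVal G t ∧ 3 ^ (n * (n + 1) / 2) * t ^ (n + 1) ≤ 4 ^ (n * (n + 1) / 2) * G.det := by
  intro n
  induction n with
  | zero =>
    intro G hG
    refine ⟨G 0 0, ⟨1, by simp, 0, by simp⟩, ?_⟩
    simp
  | succ k ih =>
    intro G hG
    obtain ⟨t, ht, hmin⟩ := exists_min_basisVal hG
    refine ⟨t, ht, ?_⟩
    have ht0 := ht.pos hG
    obtain ⟨U, e, b, G₀, hU, hH, hPD⟩ := ht.split hG
    have hdet : (bord t b G₀).det = G.det := by
      rw [← hH, Matrix.det_submatrix_equiv_self, det_conj_unit hU]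
    have hS := hPD.schur
    have hSdet := schur_det t b G₀
    rw [hdet, Fintype.card_fin] at hSdet
    have hSdet' : (schur t b G₀).det = t ^ k * G.det := by
      apply mul_left_cancel₀ ht0.ne'
      rw [hSdet]; ring
    obtain ⟨s, ⟨V, hV, j, hj⟩, hs⟩ := ih _ hS
    have hs0 : 0 < s := BasisVal.pos hS ⟨V, hV, j, hj⟩
    set y := V *ᵥ Pi.single j 1 with hy
    have hsy : s = t * (y ⬝ᵥ G₀ *ᵥ y) - (b ⬝ᵥ y) ^ 2 := by
      rw [← schur_dot, hy, ← conj_diag, hj]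
    obtain ⟨m, hm⟩ := exists_round ht0 (b ⬝ᵥ y)
    -- the vector `(m, y)` belongs to a basis
    set W : Matrix (Unit ⊕ Fin (k + 1)) (Unit ⊕ Fin (k + 1)) ℤ :=
      Matrix.fromBlocks 1 (Matrix.of fun _ i => if i = j then m else 0) 0 V with hW
    have hWdet : IsUnit W.det := by
      rw [hW, Matrix.det_fromBlocks_zero₂₁]; simpa using hV
    have hWj : W *ᵥ Pi.single (Sum.inr j) 1 = Sum.elim (fun _ => m) y := by
      ext i
      rcases i with i | i
      · simp [hW]
      · simp [hW, hy]
    have hQ : BasisVal G ((Wᵀ * bord t b G₀ * W) (Sum.inr j) (Sum.inr j)) := by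
      refine BasisVal.of_conj hU (BasisVal.of_reindex e ?_)
      rw [hH]
      exact ⟨W, hWdet, Sum.inr j, rfl⟩
    have hQ2 := hmin _ hQ
    rw [conj_diag, hWj, bord_dot] at hQ2
    simp only [Sum.elim_inl, Sum.elim_comp_inr] at hQ2
    have h3 : 3 * t ^ 2 ≤ 4 * s := by
      have h4 : t * t ≤ t * (t * m ^ 2 + 2 * m * (b ⬝ᵥ y) + y ⬝ᵥ G₀ *ᵥ y) :=
        mul_le_mul_of_nonneg_left hQ2 ht0.le
      nlinarith
    have h4 : (3 * t ^ 2) ^ (k + 1) ≤ (4 * s) ^ (k + 1) :=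
      pow_le_pow_left₀ (by positivity) h3 _
    rw [hSdet'] at hs
    have hexp : (k + 1) * (k + 1 + 1) / 2 = k * (k + 1) / 2 + (k + 1) := by
      have : (k + 1) * (k + 1 + 1) = k * (k + 1) + (k + 1) * 2 := by ring
      rw [this, Nat.add_mul_div_right _ _ (by norm_num)]
    rw [hexp]
    set E := k * (k + 1) / 2
    have htk : 0 < t ^ k := by positivity
    refine le_of_mul_le_mul_left ?_ htk
    calc t ^ k * (3 ^ (E + (k + 1)) * t ^ (k + 1 + 1))
        = 3 ^ E * (3 * t ^ 2) ^ (k + 1) := by ring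
      _ ≤ 3 ^ E * (4 * s) ^ (k + 1) := mul_le_mul_of_nonneg_left h4 (by positivity)
      _ = 4 ^ (k + 1) * (3 ^ E * s ^ (k + 1)) := by ring
      _ ≤ 4 ^ (k + 1) * (4 ^ E * (t ^ k * G.det)) := mul_le_mul_of_nonneg_left hs (by positivity)
      _ = t ^ k * (4 ^ (E + (k + 1)) * G.det) := by ring

/-! ### Diagonalisation over `ℤ[1/2]` -/

section rep

variable {ι κ : Type} [Fintype ι] [DecidableEq ι] [Fintype κ] [DecidableEq κ]

/-- `4 ^ m * G` is a sum of `n` squares of integral linear forms, for some `m`. -/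
def RepL (G : Matrix ι ι ℤ) (n : ℕ) : Prop :=
  ∃ (m : ℕ) (a : Fin n → ι → ℤ), ∀ x, 4 ^ m * (x ⬝ᵥ G *ᵥ x) = ∑ i, (a i ⬝ᵥ x) ^ 2

/-- `4 ^ m * G` is twice a square plus `n` squares of integral linear forms, for some `m`. -/
def RepR (G : Matrix ι ι ℤ) (n : ℕ) : Prop :=
  ∃ (m : ℕ) (c : ι → ℤ) (a : Fin n → ι → ℤ), ∀ x,
    4 ^ m * (x ⬝ᵥ G *ᵥ x) = 2 * (c ⬝ᵥ x) ^ 2 + ∑ i, (a i ⬝ᵥ x) ^ 2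

/-- Over `ℤ[1/2]` the form is a sum of `n` squares, or twice a square plus `n - 1` squares. -/
def DyRep (G : Matrix ι ι ℤ) (n : ℕ) : Prop := RepL G n ∨ ∃ k, n = k + 1 ∧ RepR G k

lemma dot_mulVec_transpose (P : Matrix κ ι ℤ) (a : κ → ℤ) (x : ι → ℤ) :
    a ⬝ᵥ P *ᵥ x = (Pᵀ *ᵥ a) ⬝ᵥ x := by
  rw [Matrix.dotProduct_mulVec, Matrix.mulVec_transpose]

lemma RepL.of_map {G : Matrix ι ι ℤ} {G' : Matrix κ κ ℤ} {n : ℕ} (P : Matrix κ ι ℤ)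
    (h : ∀ x, x ⬝ᵥ G *ᵥ x = (P *ᵥ x) ⬝ᵥ G' *ᵥ (P *ᵥ x)) (hG' : RepL G' n) : RepL G n := by
  obtain ⟨m, a, ha⟩ := hG'
  refine ⟨m, fun i => Pᵀ *ᵥ a i, fun x => ?_⟩
  rw [h, ha]; simp only [dot_mulVec_transpose]

lemma DyRep.of_map {G : Matrix ι ι ℤ} {G' : Matrix κ κ ℤ} {n : ℕ} (P : Matrix κ ι ℤ)
    (h : ∀ x, x ⬝ᵥ G *ᵥ x = (P *ᵥ x) ⬝ᵥ G' *ᵥ (P *ᵥ x)) (hG' : DyRep G' n) : DyRep G n := by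
  rcases hG' with h' | ⟨k, rfl, m, c, a, ha⟩
  · exact Or.inl (h'.of_map P h)
  · refine Or.inr ⟨k, rfl, m, Pᵀ *ᵥ c, fun i => Pᵀ *ᵥ a i, fun x => ?_⟩
    rw [h, ha]; simp only [dot_mulVec_transpose]

lemma DyRep.of_conj {G G' P : Matrix ι ι ℤ} {n : ℕ} (h : G = Pᵀ * G' * P) (hG' : DyRep G' n) :
    DyRep G n := DyRep.of_map P (fun x => by rw [h, dot_conj]) hG'

lemma DyRep.of_conj_unit {G U : Matrix ι ι ℤ} (hU : IsUnit U.det) {n : ℕ}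
    (h : DyRep (Uᵀ * G * U) n) : DyRep G n := by
  have hUU : U * (U.det • U.adjugate) = 1 := by
    rw [Matrix.mul_smul, Matrix.mul_adjugate, smul_smul, Int.isUnit_mul_self hU, one_smul]
  refine DyRep.of_map (U.det • U.adjugate) (fun x => ?_) h
  rw [dot_conj, Matrix.mulVec_mulVec, hUU, Matrix.one_mulVec]

lemma reindex_quad (G : Matrix ι ι ℤ) (e : ι ≃ κ) : ∃ P : Matrix κ ι ℤ,
    ∀ x, x ⬝ᵥ G *ᵥ x = (P *ᵥ x) ⬝ᵥ (G.submatrix e.symm e.symm) *ᵥ (P *ᵥ x) := by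
  refine ⟨(1 : Matrix κ κ ℤ).submatrix id e, fun x => ?_⟩
  have hx : (1 : Matrix κ κ ℤ).submatrix id e *ᵥ x = x ∘ e.symm := by
    rw [Matrix.submatrix_mulVec_equiv]; simp
  rw [hx, Matrix.submatrix_mulVec_equiv]
  have : (x ∘ e.symm) ∘ e.symm.symm = x := by ext; simp
  rw [this]
  simp only [dotProduct, Function.comp]
  exact (Equiv.sum_comp e.symm (fun k => x k * (G *ᵥ x) k)).symm

lemma DyRep.of_reindex {G : Matrix ι ι ℤ} (e : ι ≃ κ) {n : ℕ}
    (h : DyRep (G.submatrix e.symm e.symm) n) : DyRep G n := by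
  obtain ⟨P, hP⟩ := reindex_quad G e
  exact DyRep.of_map P hP h

/-- Completing the square at a corner entry `t ∈ {1, 2}`; two terms `2 a ^ 2 + 2 b ^ 2` merge into
`(a + b) ^ 2 + (a - b) ^ 2`. -/
lemma DyRep.bord {t : ℤ} (ht : t = 1 ∨ t = 2) {b : ι → ℤ} {G : Matrix ι ι ℤ} {n : ℕ}
    (h : DyRep (t • schur t b G) n) : DyRep (_root_.bord t b G) (n + 1) := by
  set l : Unit ⊕ ι → ℤ := Sum.elim (fun _ => t) b with hl
  have el : ∀ (a : ι → ℤ) (x : Unit ⊕ ι → ℤ),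
      (Sum.elim (fun _ => 0) a : Unit ⊕ ι → ℤ) ⬝ᵥ x = a ⬝ᵥ (x ∘ Sum.inr) := by
    intro a x; simp [dotProduct]
  have ell : ∀ x, l ⬝ᵥ x = t * x (Sum.inl ()) + b ⬝ᵥ (x ∘ Sum.inr) := by
    intro x; simp [hl, dotProduct]
  have key : ∀ x, t ^ 2 * (x ⬝ᵥ _root_.bord t b G *ᵥ x) = t * (l ⬝ᵥ x) ^ 2 +
      (x ∘ Sum.inr) ⬝ᵥ (t • schur t b G) *ᵥ (x ∘ Sum.inr) := by
    intro x
    rw [bord_dot, ell, Matrix.smul_mulVec, dotProduct_smul, schur_dot, smul_eq_mul]; ring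
  have p4 : ∀ m : ℕ, (4 : ℤ) ^ m = (2 ^ m) ^ 2 := by
    intro m; rw [← pow_mul, mul_comm, pow_mul]; norm_num
  rcases ht with rfl | rfl
  · rcases h with ⟨m, a, ha⟩ | ⟨k, rfl, m, c, a, ha⟩
    · refine Or.inl ⟨m, Fin.cons ((2 : ℤ) ^ m • l) (fun i => Sum.elim (fun _ => 0) (a i)),
        fun x => ?_⟩
      have h1 := key x
      have h2 := ha (x ∘ Sum.inr)
      rw [Fin.sum_univ_succ]
      simp only [Fin.cons_zero, Fin.cons_succ, smul_dotProduct, el, smul_eq_mul]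
      rw [← h2]
      have := p4 m
      linear_combination (4 : ℤ) ^ m * h1 + (l ⬝ᵥ x) ^ 2 * this
    · refine Or.inr ⟨k + 1, rfl, m, Sum.elim (fun _ => 0) c,
        Fin.cons ((2 : ℤ) ^ m • l) (fun i => Sum.elim (fun _ => 0) (a i)), fun x => ?_⟩
      have h1 := key x
      have h2 := ha (x ∘ Sum.inr)
      rw [Fin.sum_univ_succ]
      simp only [Fin.cons_zero, Fin.cons_succ, smul_dotProduct, el, smul_eq_mul]
      have := p4 m
      linear_combination (4 : ℤ) ^ m * h1 + (l ⬝ᵥ x) ^ 2 * this + h2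
  · rcases h with ⟨m, a, ha⟩ | ⟨k, rfl, m, c, a, ha⟩
    · refine Or.inr ⟨n, rfl, m + 1, (2 : ℤ) ^ m • l, fun i => Sum.elim (fun _ => 0) (a i),
        fun x => ?_⟩
      have h1 := key x
      have h2 := ha (x ∘ Sum.inr)
      simp only [smul_dotProduct, el, smul_eq_mul]
      have := p4 m
      rw [pow_succ]
      linear_combination (4 : ℤ) ^ m * h1 + 2 * (l ⬝ᵥ x) ^ 2 * this + h2
    · refine Or.inl ⟨m + 1, Fin.cons ((2 : ℤ) ^ m • l + Sum.elim (fun _ => 0) c)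
        (Fin.cons ((2 : ℤ) ^ m • l - Sum.elim (fun _ => 0) c)
          (fun i => Sum.elim (fun _ => 0) (a i))), fun x => ?_⟩
      have h1 := key x
      have h2 := ha (x ∘ Sum.inr)
      rw [Fin.sum_univ_succ, Fin.sum_univ_succ]
      simp only [Fin.cons_zero, Fin.cons_succ, smul_dotProduct, add_dotProduct, sub_dotProduct,
        el, smul_eq_mul]
      have := p4 m
      rw [pow_succ]
      linear_combination (4 : ℤ) ^ m * h1 + 2 * (l ⬝ᵥ x) ^ 2 * this + h2

end rep

/-- In dimension at most seven and determinant at most `2`, Hermite's inequality gives a basis vector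
of value at most `2`. -/
lemma hermite_bound {n : ℕ} (hn : n + 1 ≤ 7) {t d : ℤ} (hd : d = 1 ∨ d = 2)
    (h : 3 ^ (n * (n + 1) / 2) * t ^ (n + 1) ≤ 4 ^ (n * (n + 1) / 2) * d) : t ≤ 2 := by
  by_contra hlt
  push Not at hlt
  have h3 : (3 : ℤ) ^ (n + 1) ≤ t ^ (n + 1) := pow_le_pow_left₀ (by norm_num) (by omega) _
  have h4 := mul_le_mul_of_nonneg_left h3 (by positivity : (0 : ℤ) ≤ 3 ^ (n * (n + 1) / 2))
  have h5 : (4 : ℤ) ^ (n * (n + 1) / 2) * d ≤ 4 ^ (n * (n + 1) / 2) * 2 :=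
    mul_le_mul_of_nonneg_left (by omega) (by positivity)
  have h6 := (h4.trans h).trans h5
  have : n ≤ 6 := by omega
  clear h h3 h4 h5 hd hn hlt
  interval_cases n <;> norm_num at h6

/-- Induction on the dimension: enlarge to determinant `1` or `2`, split off a basis vector of value
`1` or `2`, and pass to the Schur complement, whose determinant is again a power of `2`. -/
lemma rep_of_det_two_pow : ∀ (n : ℕ), n ≤ 7 → ∀ (G : Matrix (Fin n) (Fin n) ℤ), PD G →
    ∀ k : ℕ, G.det = 2 ^ k → DyRep G n := by
  intro n
  induction n with
  | zero =>
    intro _ G _ _ _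
    exact Or.inl ⟨0, fun i => i.elim0, fun x => by simp [dotProduct]⟩
  | succ n ih =>
    intro hn G hG k hk
    obtain ⟨G', P, hG', hP, hd⟩ := exists_det_le_two hG hk
    refine DyRep.of_conj hP ?_
    obtain ⟨t, ht, hbound⟩ := hermite n G' hG'
    have ht2 := hermite_bound hn hd hbound
    have ht0 := ht.pos hG'
    have ht12 : t = 1 ∨ t = 2 := by omega
    obtain ⟨U, e, b, G₀, hU, hH, hPD⟩ := ht.split hG'
    refine DyRep.of_conj_unit hU (DyRep.of_reindex e ?_)
    rw [hH]
    refine DyRep.bord ht12 ?_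
    have hS := hPD.schur
    have hSdet := schur_det t b G₀
    have hdet : (bord t b G₀).det = G'.det := by
      rw [← hH, Matrix.det_submatrix_equiv_self, det_conj_unit hU]
    rw [hdet, Fintype.card_fin] at hSdet
    have hS2 : PD (t • schur t b G₀) := by
      refine ⟨by rw [Matrix.transpose_smul, hS.1], fun x hx => ?_⟩
      rw [Matrix.smul_mulVec, dotProduct_smul, smul_eq_mul]
      exact mul_pos ht0 (hS.2 x hx)
    have hpow : ∃ j : ℕ, (t • schur t b G₀).det = 2 ^ j := by
      obtain ⟨u, hu⟩ : ∃ u : ℕ, t = 2 ^ u := by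
        rcases ht12 with h | h
        · exact ⟨0, by simp [h]⟩
        · exact ⟨1, by simp [h]⟩
      obtain ⟨v, hv⟩ : ∃ v : ℕ, G'.det = 2 ^ v := by
        rcases hd with h | h
        · exact ⟨0, by simp [h]⟩
        · exact ⟨1, by simp [h]⟩
      have h1 : (t • schur t b G₀).det ∣ 2 ^ (u * n + (u * n + v)) := by
        rw [Matrix.det_smul, Fintype.card_fin]
        refine ⟨t, ?_⟩
        rw [mul_assoc, mul_comm _ t, hSdet, hu, hv]; ring
      have h2 := Int.natAbs_dvd_natAbs.mpr h1
      rw [Int.natAbs_pow] at h2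
      obtain ⟨j, -, hj⟩ := (Nat.dvd_prime_pow Nat.prime_two).mp h2
      refine ⟨j, ?_⟩
      have := hS2.det_pos
      generalize (t • schur t b G₀).det = D at hj this ⊢
      have h2 : (D.natAbs : ℤ) = 2 ^ j := by exact_mod_cast hj
      rwa [Int.natAbs_of_nonneg this.le] at h2
    obtain ⟨j, hj⟩ := hpow
    exact ih (by omega) _ hS2 j hj

lemma eq_of_quad_eq {ι : Type} [Fintype ι] [DecidableEq ι] {A B : Matrix ι ι ℤ} (hA : Aᵀ = A)
    (hB : Bᵀ = B) (h : ∀ x, x ⬝ᵥ A *ᵥ x = x ⬝ᵥ B *ᵥ x) : A = B := by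
  ext i j
  have e : ∀ (A : Matrix ι ι ℤ) i j, (Pi.single i 1 : ι → ℤ) ⬝ᵥ A *ᵥ Pi.single j 1 = A i j := by
    intro A i j; simp
  have h1 := h (Pi.single i 1)
  have h2 := h (Pi.single j 1)
  have h3 := h (Pi.single i 1 + Pi.single j 1)
  simp only [Matrix.mulVec_add, dotProduct_add, add_dotProduct, e] at h1 h2 h3
  have h4 : A j i = A i j := congrFun (congrFun hA i) j
  have h5 : B j i = B i j := congrFun (congrFun hB i) j
  linarith

/-- Twice a square plus six squares is impossible for a unimodular form: comparing determinants,
`4 ^ (7 m)` would be twice a square. -/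
lemma not_repR {G : Matrix (Fin 7) (Fin 7) ℤ} (hs : Gᵀ = G) (hd : G.det = 1) : ¬ RepR G 6 := by
  rintro ⟨m, c, a, h⟩
  set R : Matrix (Fin 7) (Fin 7) ℤ := Matrix.of (Fin.cons c a) with hR
  set D : Matrix (Fin 7) (Fin 7) ℤ := Matrix.diagonal (Fin.cons 2 fun _ => 1) with hD
  have hRx : ∀ x, R *ᵥ x = Fin.cons (c ⬝ᵥ x) fun i => a i ⬝ᵥ x := by
    intro x; ext i
    refine Fin.cases ?_ (fun i => ?_) i <;> simp [hR, Matrix.mulVec]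
  have e : (4 : ℤ) ^ m • G = Rᵀ * D * R := by
    refine eq_of_quad_eq (by rw [Matrix.transpose_smul, hs])
      (by simp [Matrix.transpose_mul, hD, Matrix.mul_assoc]) (fun x => ?_)
    rw [dot_conj, hRx, Matrix.smul_mulVec, dotProduct_smul, smul_eq_mul, h]
    have dp : ∀ u v : Fin 7 → ℤ, u ⬝ᵥ v = u 0 * v 0 + ∑ i : Fin 6, u i.succ * v i.succ :=
      fun u v => Fin.sum_univ_succ _
    rw [dp (Fin.cons _ _)]
    simp only [hD, Matrix.mulVec_diagonal, Fin.cons_zero, Fin.cons_succ]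
    congr 1
    · ring
    · exact Finset.sum_congr rfl fun i _ => by ring
  have e2 := congrArg Matrix.det e
  rw [Matrix.det_smul, hd, Fintype.card_fin, Matrix.det_mul, Matrix.det_mul, Matrix.det_transpose,
    hD, Matrix.det_diagonal, Fin.prod_univ_succ] at e2
  simp only [Fin.cons_zero, Fin.cons_succ, Finset.prod_const_one, mul_one] at e2
  have e3 : ((2 : ℤ) ^ (7 * m)) ^ 2 = 2 * R.det ^ 2 := by
    have : ((2 : ℤ) ^ (7 * m)) ^ 2 = (4 ^ m) ^ 7 := by
      rw [← pow_mul, ← pow_mul, mul_comm (7 * m), pow_mul]; norm_num [mul_comm]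
    rw [this, e2]; ring
  have hR0 : R.det ≠ 0 := by
    intro h0
    rw [h0] at e3
    have : (0 : ℤ) < (2 ^ (7 * m)) ^ 2 := by positivity
    omega
  have e4 : (2 ^ (7 * m)) ^ 2 = 2 * R.det.natAbs ^ 2 := by
    have := congrArg Int.natAbs e3
    simpa [Int.natAbs_pow, Int.natAbs_mul] using this
  have e5 := congrArg (fun n => Nat.factorization n 2) e4
  rw [Nat.factorization_mul (by norm_num) (by simpa using hR0), Nat.factorization_pow,
    Nat.factorization_pow] at e5
  simp [Nat.prime_two.factorization_self] at e5
  omega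

/-- A positive definite unimodular form in seven variables is, up to a power of `4`, a sum of
seven squares of integral linear forms. -/
lemma repL_of_unimodular {ι : Type} [Fintype ι] [DecidableEq ι] (hι : Fintype.card ι = 7)
    {G : Matrix ι ι ℤ} (hG : PD G) (hd : G.det = 1) : RepL G 7 := by
  let e : ι ≃ Fin 7 := Fintype.equivFinOfCardEq hι
  have hd' : (G.submatrix e.symm e.symm).det = 1 := by rwa [Matrix.det_submatrix_equiv_self]
  have hG' := hG.reindex e
  rcases rep_of_det_two_pow 7 le_rfl _ hG' 0 (by simpa using hd') with h | ⟨k, hk, h⟩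
  · obtain ⟨P, hP⟩ := reindex_quad G e
    exact h.of_map P hP
  · obtain rfl : k = 6 := by omega
    exact (not_repR hG'.1 hd' h).elim

/-! ### Removing powers of two by reflections -/

/-- If `w / 2` is not integral but has integral norm, exactly four coordinates of `w` are odd, so an
integral `z` at distance one from `w / 2` exists; changing the rounding of one odd coordinate changes
the parity of `|z|²`, which lets it agree with that of `|w / 2|²`. -/
lemma exists_near (w : Fin 7 → ℤ) (hodd : ∃ i, w i % 2 = 1) (h4 : (4 : ℤ) ∣ ∑ i, w i ^ 2) :
    ∃ z : Fin 7 → ℤ, ∑ i, (w i - 2 * z i) ^ 2 = 4 ∧ (8 : ℤ) ∣ ∑ i, w i ^ 2 - 4 * ∑ i, z i ^ 2 := by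
  obtain ⟨i, hi⟩ := hodd
  have hpt : ∀ j, (4 : ℤ) ∣ w j ^ 2 - w j % 2 := by
    intro j
    rcases Int.emod_two_eq_zero_or_one (w j) with h | h
    · obtain ⟨k, hk⟩ : ∃ k, w j = 2 * k := ⟨w j / 2, by omega⟩
      rw [h, hk]; exact ⟨k ^ 2, by ring⟩
    · obtain ⟨k, hk⟩ : ∃ k, w j = 2 * k + 1 := ⟨w j / 2, by omega⟩
      rw [h, hk]; exact ⟨k ^ 2 + k, by ring⟩
  have hs4 : (4 : ℤ) ∣ ∑ j, w j % 2 := by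
    have := Finset.dvd_sum (s := Finset.univ) fun j _ => hpt j
    rw [Finset.sum_sub_distrib] at this
    exact (dvd_sub_right h4).mp this
  have hs7 : ∑ j, w j % 2 ≤ 7 := by
    have := Finset.sum_le_card_nsmul (Finset.univ : Finset (Fin 7)) (fun j => w j % 2) 1
      (fun j _ => by omega)
    simpa using this
  have hs1 : 1 ≤ ∑ j, w j % 2 := by
    have := Finset.single_le_sum (f := fun j => w j % 2) (fun j _ => by omega : ∀ j ∈ Finset.univ,
      0 ≤ w j % 2) (Finset.mem_univ i)
    simp only [hi] at this
    exact this
  have hs : ∑ j, w j % 2 = 4 := by omega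
  have hz0 : ∑ j, (w j - 2 * (w j / 2)) ^ 2 = 4 := by
    rw [← hs]
    refine Finset.sum_congr rfl fun j _ => ?_
    have e : w j - 2 * (w j / 2) = w j % 2 := by omega
    rw [e]
    rcases Int.emod_two_eq_zero_or_one (w j) with h | h <;> rw [h] <;> norm_num
  by_cases h8 : (8 : ℤ) ∣ ∑ j, w j ^ 2 - 4 * ∑ j, (w j / 2) ^ 2
  · exact ⟨fun j => w j / 2, hz0, h8⟩
  refine ⟨fun j => w j / 2 + if j = i then 1 else 0, ?_, ?_⟩
  · have : ∀ j, (w j - 2 * (w j / 2 + if j = i then 1 else 0)) ^ 2 = (w j - 2 * (w j / 2)) ^ 2 := by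
      intro j
      split_ifs with hj
      · subst hj
        have e : w j = 2 * (w j / 2) + 1 := by omega
        generalize w j / 2 = k at e
        rw [e]; ring
      · simp
    simp only [this, hz0]
  · have : ∀ j, (w j / 2 + if j = i then 1 else 0) ^ 2 = (w j / 2) ^ 2 +
        if j = i then 2 * (w i / 2) + 1 else 0 := by
      intro j
      split_ifs with hj
      · subst hj; ring
      · ring
    simp only [this, Finset.sum_add_distrib, Finset.sum_ite_eq', Finset.mem_univ, if_true]
    omega

/-- A rational vector with integral coordinates. -/
def IsI (v : Fin 7 → ℚ) : Prop := ∃ z : Fin 7 → ℤ, v = fun i => (z i : ℚ)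

lemma IsI.add {v w : Fin 7 → ℚ} (hv : IsI v) (hw : IsI w) : IsI (v + w) := by
  obtain ⟨a, rfl⟩ := hv
  obtain ⟨b, rfl⟩ := hw
  exact ⟨a + b, by ext i; simp⟩

lemma IsI.smul {v : Fin 7 → ℚ} (hv : IsI v) (n : ℤ) : IsI ((n : ℚ) • v) := by
  obtain ⟨a, rfl⟩ := hv
  exact ⟨n • a, by ext i; simp⟩

lemma IsI.dot {v w : Fin 7 → ℚ} (hv : IsI v) (hw : IsI w) : ∃ n : ℤ, v ⬝ᵥ w = n := by
  obtain ⟨a, rfl⟩ := hv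
  obtain ⟨b, rfl⟩ := hw
  exact ⟨a ⬝ᵥ b, by simp [dotProduct]⟩

/-- For a half-integral but not integral `v` of integral norm there is a vector `y` of norm one
whose reflection makes `v` integral and preserves integrality of the vectors having integral
product with `v`. -/
lemma exists_reflection {v : Fin 7 → ℚ} (hv : ¬ IsI v) (h2 : IsI ((2 : ℚ) • v))
    (hn : ∃ n : ℤ, v ⬝ᵥ v = n) : ∃ y : Fin 7 → ℚ, y ⬝ᵥ y = 1 ∧ IsI ((2 : ℚ) • y) ∧
      IsI (v - (2 * (v ⬝ᵥ y)) • y) ∧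
      ∀ u, IsI u → (∃ n : ℤ, u ⬝ᵥ v = n) → IsI (u - (2 * (u ⬝ᵥ y)) • y) := by
  obtain ⟨w, hw⟩ := h2
  obtain ⟨n, hn⟩ := hn
  have hvw : ∀ i, v i = (w i : ℚ) / 2 := by
    intro i
    have := congrFun hw i
    simp only [Pi.smul_apply, smul_eq_mul] at this
    linarith
  have hodd : ∃ i, w i % 2 = 1 := by
    by_contra hne
    push Not at hne
    apply hv
    refine ⟨fun i => w i / 2, ?_⟩
    ext i
    have : w i = 2 * (w i / 2) := by have := hne i; omega
    rw [hvw]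
    conv_lhs => rw [this]
    push_cast; ring
  have hww : ∑ i, w i ^ 2 = 4 * n := by
    have : (∑ i, (w i : ℚ) ^ 2) = 4 * n := by
      rw [← hn]
      simp only [dotProduct, hvw, Finset.mul_sum]
      exact Finset.sum_congr rfl fun i _ => by ring
    exact_mod_cast this
  obtain ⟨z, hz1, k, hk⟩ := exists_near w hodd ⟨n, hww⟩
  set zq : Fin 7 → ℚ := fun i => (z i : ℚ) with hzq
  have hzI : IsI zq := ⟨z, rfl⟩
  have hzz : zq ⬝ᵥ zq = ((∑ i, z i ^ 2 : ℤ) : ℚ) := by simp [dotProduct, hzq, sq]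
  set y := v - zq with hy
  have hyy : y ⬝ᵥ y = 1 := by
    have : (∑ i, ((w i : ℚ) - 2 * z i) ^ 2) = 4 := by exact_mod_cast hz1
    have e : 4 * (y ⬝ᵥ y) = ∑ i, ((w i : ℚ) - 2 * z i) ^ 2 := by
      simp only [dotProduct, hy, hzq, Pi.sub_apply, hvw, Finset.mul_sum]
      exact Finset.sum_congr rfl fun i _ => by ring
    linarith
  have h2y : IsI ((2 : ℚ) • y) := by
    refine ⟨fun i => w i - 2 * z i, ?_⟩
    ext i
    simp only [hy, hzq, Pi.smul_apply, Pi.sub_apply, hvw, smul_eq_mul]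
    push_cast; ring
  refine ⟨y, hyy, h2y, ?_, ?_⟩
  · have hvy : 2 * (v ⬝ᵥ y) = 2 * k + 1 := by
      have e1 : y ⬝ᵥ y = v ⬝ᵥ v - 2 * (v ⬝ᵥ zq) + zq ⬝ᵥ zq := by
        rw [hy, sub_dotProduct, dotProduct_sub, dotProduct_sub, dotProduct_comm zq v]; ring
      have e2 : v ⬝ᵥ y = v ⬝ᵥ v - v ⬝ᵥ zq := by rw [hy, dotProduct_sub]
      have e3 : (v ⬝ᵥ v) - zq ⬝ᵥ zq = 2 * k := by
        rw [hn, hzz]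
        have : n - ∑ i, z i ^ 2 = 2 * k := by omega
        exact_mod_cast this
      linarith
    have : v - (2 * (v ⬝ᵥ y)) • y = zq + ((-k : ℤ) : ℚ) • ((2 : ℚ) • y) := by
      rw [hvy]
      ext i
      simp only [hy, Pi.sub_apply, Pi.smul_apply, Pi.add_apply, smul_eq_mul]
      push_cast; ring
    rw [this]
    exact hzI.add (h2y.smul _)
  · rintro u hu ⟨a, ha⟩
    obtain ⟨b, hb⟩ := hu.dot hzI
    have : u - (2 * (u ⬝ᵥ y)) • y = u + ((b - a : ℤ) : ℚ) • ((2 : ℚ) • y) := by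
      rw [show u ⬝ᵥ y = a - b by rw [hy, dotProduct_sub, ha, hb]]
      ext i
      simp only [Pi.sub_apply, Pi.smul_apply, Pi.add_apply, smul_eq_mul]
      push_cast; ring
    rw [this]
    exact hu.add (h2y.smul _)

lemma reflection_dot {y : Fin 7 → ℚ} (hy : y ⬝ᵥ y = 1) (u v : Fin 7 → ℚ) :
    (u - (2 * (u ⬝ᵥ y)) • y) ⬝ᵥ (v - (2 * (v ⬝ᵥ y)) • y) = u ⬝ᵥ v := by
  simp only [sub_dotProduct, dotProduct_sub, smul_dotProduct, dotProduct_smul, hy, smul_eq_mul,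
    dotProduct_comm y v]
  ring

/-- The reflection in the hyperplane orthogonal to the unit vector `y`. -/
def reflect (y : Fin 7 → ℚ) : (Fin 7 → ℚ) →ₗ[ℤ] (Fin 7 → ℚ) where
  toFun u := u - (2 * (u ⬝ᵥ y)) • y
  map_add' u v := by
    ext i; simp only [add_dotProduct, Pi.sub_apply, Pi.add_apply, Pi.smul_apply, smul_eq_mul]; ring
  map_smul' n u := by
    have : (n • u) ⬝ᵥ y = n * (u ⬝ᵥ y) := by
      rw [smul_dotProduct, zsmul_eq_mul]
    rw [this]
    ext i
    simp only [Pi.sub_apply, Pi.smul_apply, smul_eq_mul, eq_intCast, Int.cast_id]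
    rw [zsmul_eq_mul, zsmul_eq_mul]
    ring

/-- If the products of the vectors `g x` are integral and their denominators are powers of `2`,
then a product of reflections makes all of them integral. The submodule `H` of vectors already
integral grows with each reflection, which terminates the process. -/
lemma integralize {M : Type} [AddCommGroup M] [Module.Finite ℤ M] (H : Submodule ℤ M) :
    ∀ g : M →ₗ[ℤ] (Fin 7 → ℚ), (∀ x y, ∃ n : ℤ, g x ⬝ᵥ g y = n) →
    (∀ x, ∃ m : ℕ, IsI ((2 : ℚ) ^ m • g x)) → (∀ x ∈ H, IsI (g x)) →
    ∃ g' : M →ₗ[ℤ] (Fin 7 → ℚ), (∀ x, IsI (g' x)) ∧ ∀ x, g' x ⬝ᵥ g' x = g x ⬝ᵥ g x := by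
  induction H using WellFoundedGT.induction with
  | _ H ih =>
  intro g hg hden hH
  by_cases hall : ∀ x, IsI (g x)
  · exact ⟨g, hall, fun _ => rfl⟩
  push Not at hall
  obtain ⟨x, hx⟩ := hall
  obtain ⟨n, hn1, hn2⟩ : ∃ n, ¬ IsI (g n) ∧ IsI ((2 : ℚ) • g n) := by
    classical
    have hm := Nat.find_spec (hden x)
    set m := Nat.find (hden x) with hmdef
    have hm0 : m ≠ 0 := by
      intro h0
      rw [h0] at hm
      exact hx (by simpa using hm)
    have hmin := Nat.find_min (hden x) (m := m - 1) (by omega)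
    have e : g ((2 : ℤ) ^ (m - 1) • x) = (2 : ℚ) ^ (m - 1) • g x := by
      rw [map_smul]; ext i; simp
    refine ⟨(2 : ℤ) ^ (m - 1) • x, by rwa [e], ?_⟩
    rw [e, smul_smul, ← pow_succ', Nat.sub_add_cancel (by omega)]
    exact hm
  obtain ⟨y, hy1, hy2, hyv, hyu⟩ := exists_reflection hn1 hn2 (hg n n)
  have hdot : ∀ u v, reflect y u ⬝ᵥ reflect y v = u ⬝ᵥ v := reflection_dot hy1
  have hlt : H < H ⊔ Submodule.span ℤ {n} := by
    refine lt_of_le_of_ne le_sup_left fun he => hn1 (hH n ?_)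
    rw [he]
    exact Submodule.mem_sup_right (Submodule.mem_span_singleton_self n)
  obtain ⟨g', h1, h2⟩ := ih _ hlt ((reflect y).comp g)
    (fun a b => by simpa only [LinearMap.comp_apply, hdot] using hg a b) (fun a => by
      obtain ⟨m, hm⟩ := hden a
      obtain ⟨k, hk⟩ := hm.dot hy2
      refine ⟨m + 1, ?_⟩
      have e : (2 : ℚ) ^ (m + 1) • (reflect y) (g a) =
          ((2 : ℤ) : ℚ) • ((2 : ℚ) ^ m • g a) + ((-k : ℤ) : ℚ) • ((2 : ℚ) • y) := by
        have hk' : (2 : ℚ) ^ m * (2 * (g a ⬝ᵥ y)) = k := by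
          rw [← hk, smul_dotProduct, dotProduct_smul, smul_eq_mul, smul_eq_mul]
        ext i
        change (2 : ℚ) ^ (m + 1) * (g a i - (2 * (g a ⬝ᵥ y)) * y i) =
          ((2 : ℤ) : ℚ) * ((2 : ℚ) ^ m * g a i) + ((-k : ℤ) : ℚ) * ((2 : ℚ) * y i)
        push_cast
        rw [← hk']; ring
      rw [LinearMap.comp_apply, e]
      exact (hm.smul _).add (hy2.smul _)) (fun a ha => by
      obtain ⟨b, hb, c, hc, rfl⟩ := Submodule.mem_sup.mp ha
      obtain ⟨k, rfl⟩ := Submodule.mem_span_singleton.mp hc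
      rw [map_add, map_smul]
      refine IsI.add (hyu _ (hH b hb) (hg b n)) ?_
      have : k • ((reflect y).comp g) n = (k : ℚ) • ((reflect y).comp g) n := by
        ext i; simp
      rw [this]
      exact IsI.smul hyv k)
  refine ⟨g', h1, fun a => ?_⟩
  rw [h2, LinearMap.comp_apply, hdot]

/-! ### Quaternary forms as sums of seven squares -/

/-- The sublattice of a unimodular lattice of rank seven, diagonalised over `ℤ[1/2]` and then made
integral by reflections. -/
lemma maximal_rep {F : Matrix (Fin 4) (Fin 4) ℤ} (hF : PD F)
    (hmax : ∀ p : ℕ, p.Prime → ∀ x, ¬ Enl F p x) :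
    ∃ Y : Fin 7 → Fin 4 → ℤ, ∀ x, x ⬝ᵥ F *ᵥ x = ∑ i, (Y i ⬝ᵥ x) ^ 2 := by
  obtain ⟨G, hG, hdet, hGF⟩ := exists_unimodular hF hmax
  obtain ⟨m, a, ha⟩ := repL_of_unimodular (by simp) hG hdet
  let em : (Fin 4 → ℤ) → (Unit ⊕ Unit ⊕ Unit ⊕ Fin 4 → ℤ) := fun y =>
    Sum.elim 0 (Sum.elim 0 (Sum.elim 0 y))
  have hem : ∀ y, em y ⬝ᵥ G *ᵥ em y = y ⬝ᵥ F *ᵥ y := by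
    intro y
    simp [em, dotProduct, mulVec, Fintype.sum_sum_type, hGF]
  let c : Fin 7 → Fin 4 → ℤ := fun i j => a i (Sum.inr (Sum.inr (Sum.inr j)))
  have hc : ∀ i y, a i ⬝ᵥ em y = c i ⬝ᵥ y := by
    intro i y
    simp [em, c, dotProduct, Fintype.sum_sum_type]
  have hF4 : ∀ y, 4 ^ m * (y ⬝ᵥ F *ᵥ y) = ∑ i, (c i ⬝ᵥ y) ^ 2 := by
    intro y
    have := ha (em y)
    simpa only [hem, hc] using this
  let g : (Fin 4 → ℤ) →ₗ[ℤ] (Fin 7 → ℚ) :=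
    { toFun := fun y i => ((c i ⬝ᵥ y : ℤ) : ℚ) / 2 ^ m
      map_add' := fun x y => by
        ext i; simp only [dotProduct_add, Pi.add_apply]; push_cast; ring
      map_smul' := fun n y => by
        ext i
        simp only [dotProduct_smul, Pi.smul_apply, smul_eq_mul, eq_intCast, Int.cast_id]
        rw [zsmul_eq_mul]
        push_cast; ring }
  have hgq : ∀ y, g y ⬝ᵥ g y = ((y ⬝ᵥ F *ᵥ y : ℤ) : ℚ) := by
    intro y
    have h1 : ((4 : ℚ) ^ m) * ((y ⬝ᵥ F *ᵥ y : ℤ) : ℚ) = ∑ i, ((c i ⬝ᵥ y : ℤ) : ℚ) ^ 2 := by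
      exact_mod_cast hF4 y
    have h2 : (4 : ℚ) ^ m * (g y ⬝ᵥ g y) = ∑ i, ((c i ⬝ᵥ y : ℤ) : ℚ) ^ 2 := by
      change (4 : ℚ) ^ m * (∑ i, ((c i ⬝ᵥ y : ℤ) : ℚ) / 2 ^ m * (((c i ⬝ᵥ y : ℤ) : ℚ) / 2 ^ m)) = _
      rw [Finset.mul_sum]
      refine Finset.sum_congr rfl fun i _ => ?_
      rw [show (4 : ℚ) = 2 * 2 by norm_num, mul_pow]
      field_simp
    have h4 : (4 : ℚ) ^ m ≠ 0 := by positivity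
    exact mul_left_cancel₀ h4 (h2.trans h1.symm)
  have hgb : ∀ x y, g x ⬝ᵥ g y = ((x ⬝ᵥ F *ᵥ y : ℤ) : ℚ) := by
    intro x y
    have h1 := hgq (x + y)
    rw [map_add, dotProduct_add, add_dotProduct, add_dotProduct, hgq, hgq, mulVec_add,
      dotProduct_add, add_dotProduct, add_dotProduct, hF.dot_symm y x, dotProduct_comm (g y)] at h1
    push_cast at h1
    linarith
  obtain ⟨g', hI, hg'⟩ := integralize (⊥ : Submodule ℤ (Fin 4 → ℤ)) g (fun x y => ⟨_, hgb x y⟩)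
    (fun x => ⟨m, fun i => c i ⬝ᵥ x, by
      ext i
      change (2 : ℚ) ^ m * (((c i ⬝ᵥ x : ℤ) : ℚ) / 2 ^ m) = _
      field_simp⟩)
    (fun x hx => by
      rw [(Submodule.mem_bot ℤ).mp hx, map_zero]
      exact ⟨0, by ext i; simp⟩)
  choose z hz using fun j => hI (Pi.single j 1)
  refine ⟨fun i j => z j i, fun x => ?_⟩
  have hgx : ∀ i, g' x i = ((fun j => z j i) ⬝ᵥ x : ℤ) := by
    intro i
    have hx : x = ∑ j, x j • (Pi.single j 1 : Fin 4 → ℤ) := by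
      ext k; simp [Finset.sum_apply, Pi.single_apply]
    conv_lhs => rw [hx]
    rw [map_sum, Finset.sum_apply]
    simp only [map_smul, Pi.smul_apply, hz, dotProduct]
    push_cast
    exact Finset.sum_congr rfl fun j _ => by rw [zsmul_eq_mul]; ring
  have h := hg' x
  rw [hgq] at h
  have h' : ((x ⬝ᵥ F *ᵥ x : ℤ) : ℚ) = ∑ i, (((fun j => z j i) ⬝ᵥ x : ℤ) : ℚ) ^ 2 := by
    rw [← h]
    exact Finset.sum_congr rfl fun i _ => by rw [hgx]; ring
  exact_mod_cast h'

/-- **Ko's theorem** for quaternary forms: a positive definite quaternary form with integral matrix is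
a sum of seven squares of integral linear forms. -/
lemma pd_rep {F : Matrix (Fin 4) (Fin 4) ℤ} (hF : PD F) :
    ∃ Y : Fin 7 → Fin 4 → ℤ, ∀ x, x ⬝ᵥ F *ᵥ x = ∑ i, (Y i ⬝ᵥ x) ^ 2 := by
  obtain ⟨F', P, hF', hP, hmax⟩ := exists_maximal hF
  obtain ⟨Y, hY⟩ := maximal_rep hF' hmax
  refine ⟨fun i => Y i ᵥ* P, fun x => ?_⟩
  have := dot_conj P F' x x
  simp only [← dotProduct_mulVec, ← hY]
  rw [hP]
  exact this

/-- The semidefinite case: the image of `x ↦ (X i · x)` is a lattice of rank `r ≤ 4`; its Gram matrix,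
padded by an identity block of size `4 - r`, is positive definite. -/
lemma psd_rep {N : ℕ} (X : Fin N → Fin 4 → ℤ) :
    ∃ Y : Fin 7 → Fin 4 → ℤ, ∀ x, ∑ i, (X i ⬝ᵥ x) ^ 2 = ∑ i, (Y i ⬝ᵥ x) ^ 2 := by
  let f : (Fin 4 → ℤ) →ₗ[ℤ] (Fin N → ℤ) := Matrix.mulVecLin (Matrix.of X)
  have hf : ∀ x i, f x i = X i ⬝ᵥ x := fun x i => rfl
  let R := LinearMap.range f
  let b := Module.finBasis ℤ R
  set r := Module.finrank ℤ R with hr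
  have hr4 : r ≤ 4 := by
    have := LinearMap.finrank_range_le f
    simpa using this
  -- pad the basis to a length-4 family by adding orthonormal vectors
  obtain ⟨s, hs⟩ : ∃ s, r + s = 4 := ⟨4 - r, by omega⟩
  let e : Fin r ⊕ Fin s ≃ Fin 4 := finSumFinEquiv.trans (finCongr hs)
  let v : (Fin 4 → ℤ) → (Fin N → ℤ) := fun y => ∑ i, y (e (Sum.inl i)) • (b i : Fin N → ℤ)
  let B : Matrix (Fin N) (Fin 4) ℤ := fun k j => Sum.elim (fun i => (b i : Fin N → ℤ) k) 0 (e.symm j)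
  let D : Matrix (Fin s) (Fin 4) ℤ := fun k j => Sum.elim 0 (fun i => if i = k then 1 else 0) (e.symm j)
  have hB : ∀ y, B *ᵥ y = v y := by
    intro y
    ext k
    simp only [mulVec, dotProduct, v, Finset.sum_apply, Pi.smul_apply, smul_eq_mul]
    rw [← e.sum_comp, Fintype.sum_sum_type]
    simp [B, mul_comm]
  have hD : ∀ y k, (D *ᵥ y) k = y (e (Sum.inr k)) := by
    intro y k
    simp only [mulVec, dotProduct]
    rw [← e.sum_comp, Fintype.sum_sum_type]
    simp [D]
  let F : Matrix (Fin 4) (Fin 4) ℤ := Bᵀ * B + Dᵀ * D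
  have hFq : ∀ y, y ⬝ᵥ F *ᵥ y = v y ⬝ᵥ v y + ∑ k, y (e (Sum.inr k)) ^ 2 := by
    intro y
    have h1 : D *ᵥ y ⬝ᵥ D *ᵥ y = ∑ k, y (e (Sum.inr k)) ^ 2 := by
      simp only [dotProduct, hD, sq]
    rw [← h1, ← hB]
    simp only [F, add_mulVec, dotProduct_add, ← mulVec_mulVec, dotProduct_mulVec, vecMul_transpose]
  have hF : PD F := by
    refine ⟨?_, ?_⟩
    · simp [F, transpose_add, transpose_mul]
    · intro y hy
      rw [hFq]
      have h1 : 0 ≤ v y ⬝ᵥ v y := by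
        simp only [dotProduct]; exact Finset.sum_nonneg fun i _ => mul_self_nonneg _
      have h2 : 0 ≤ ∑ k, y (e (Sum.inr k)) ^ 2 := Finset.sum_nonneg fun i _ => sq_nonneg _
      by_contra hle
      have h3 : v y ⬝ᵥ v y = 0 := by omega
      have h4 : ∑ k, y (e (Sum.inr k)) ^ 2 = 0 := by omega
      apply hy
      have h5 : v y = 0 := dotProduct_self_eq_zero.mp h3
      have h6 : ∀ i, y (e (Sum.inl i)) = 0 := by
        have := b.linearIndependent
        rw [Fintype.linearIndependent_iff] at this
        apply this
        apply Subtype.ext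
        simpa [v] using h5
      have h7 : ∀ k, y (e (Sum.inr k)) = 0 := by
        intro k
        rw [Finset.sum_eq_zero_iff_of_nonneg fun i _ => sq_nonneg _] at h4
        exact pow_eq_zero_iff (two_ne_zero) |>.mp (h4 k (Finset.mem_univ k))
      ext j
      obtain ⟨t, rfl⟩ := e.surjective j
      rcases t with i | k
      · exact h6 i
      · exact h7 k
  obtain ⟨Y, hY⟩ := pd_rep hF
  -- coordinates of `f x` in the basis
  let C : Matrix (Fin 4) (Fin 4) ℤ := fun j l =>
    Sum.elim (fun i => b.repr ⟨f (Pi.single l 1), LinearMap.mem_range_self _ _⟩ i) 0 (e.symm j)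
  have hC : ∀ x, v (C *ᵥ x) = f x ∧ ∀ k, (C *ᵥ x) (e (Sum.inr k)) = 0 := by
    intro x
    refine ⟨?_, fun k => by simp [C, mulVec, dotProduct]⟩
    have h1 : ∀ l, ∑ i, C (e (Sum.inl i)) l • (b i : Fin N → ℤ) = f (Pi.single l 1) := by
      intro l
      have := congrArg Subtype.val
        (b.sum_repr ⟨f (Pi.single l 1), LinearMap.mem_range_self f _⟩)
      rw [Submodule.coe_sum] at this
      simpa only [C, Equiv.symm_apply_apply, Sum.elim_inl, Submodule.coe_smul] using this
    have hx : x = ∑ j, x j • (Pi.single j 1 : Fin 4 → ℤ) := by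
      ext k; simp [Finset.sum_apply, Pi.single_apply]
    conv_rhs => rw [hx]
    rw [map_sum]
    simp only [map_smul, ← h1, v, mulVec, dotProduct, Finset.sum_smul, Finset.smul_sum, smul_smul]
    rw [Finset.sum_comm]
    exact Finset.sum_congr rfl fun l _ => Finset.sum_congr rfl fun i _ => by rw [mul_comm]
  refine ⟨fun i => Y i ᵥ* C, fun x => ?_⟩
  simp only [← dotProduct_mulVec, ← hY, hFq, (hC x).1, (hC x).2]
  simp [dotProduct, hf, sq]

/-- Any family of integral vectors in `ℤ⁴` has the same matrix `∑ Xᵢ Xᵢᵀ` as some family of seven. -/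
lemma gram_rep {N : ℕ} (X : Fin N → Fin 4 → ℤ) :
    ∃ Y : Fin 7 → Fin 4 → ℤ, ∀ j l, ∑ i, X i j * X i l = ∑ i, Y i j * Y i l := by
  obtain ⟨Y, hY⟩ := psd_rep X
  refine ⟨Y, fun j l => ?_⟩
  have h1 := hY (Pi.single j 1 + Pi.single l 1)
  have h2 := hY (Pi.single j 1)
  have h3 := hY (Pi.single l 1)
  simp only [dotProduct_add, dotProduct_single, mul_one, add_sq, Finset.sum_add_distrib, mul_assoc,
    ← Finset.mul_sum] at h1 h2 h3
  omega

/-! ### Arithmetic of `ℚ(√p, √q)` -/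

lemma irrational_sqrt_of_squarefree {n : ℕ} (hn : Squarefree n) (h1 : 1 < n) :
    Irrational (Real.sqrt n) := by
  rw [irrational_sqrt_natCast_iff]
  rintro ⟨k, hk⟩
  have := Nat.isUnit_iff.mp (hn k ⟨1, by omega⟩)
  subst this
  omega

lemma irrational_coeff {θ : ℝ} (h : Irrational θ) {u v : ℚ} (e : (u : ℝ) + v * θ = 0) :
    u = 0 ∧ v = 0 := by
  have hv : v = 0 := by
    by_contra hv
    refine h ⟨-u / v, ?_⟩
    have : (v : ℝ) ≠ 0 := by exact_mod_cast hv
    push_cast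
    field_simp
    linarith
  subst hv
  refine ⟨?_, rfl⟩
  have : (u : ℝ) = 0 := by simpa using e
  exact_mod_cast this

/-- Linear independence of `1, √p, √q, √(pq)` over the rationals. -/
lemma coeff_zero {s t : ℝ} {P Q : ℚ} (hs : s ^ 2 = P) (ht : t ^ 2 = Q) (hsi : Irrational s)
    (hti : Irrational t) (hsti : Irrational (s * t)) {a b c d : ℚ}
    (h : (a : ℝ) + b * s + c * t + d * (s * t) = 0) : a = 0 ∧ b = 0 ∧ c = 0 ∧ d = 0 := by
  have h1 : ((a ^ 2 + P * b ^ 2 - Q * (c ^ 2 + P * d ^ 2) : ℚ) : ℝ)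
      + ((2 * a * b - Q * (2 * c * d) : ℚ) : ℝ) * s = 0 := by
    push_cast
    linear_combination (a + b * s - c * t - d * (s * t)) * h + (-b ^ 2 + d ^ 2 * t ^ 2) * hs
      + (c ^ 2 + d ^ 2 * P + 2 * c * d * s) * ht
  have h2 : ((a ^ 2 + Q * c ^ 2 - P * (b ^ 2 + Q * d ^ 2) : ℚ) : ℝ)
      + ((2 * a * c - P * (2 * b * d) : ℚ) : ℝ) * t = 0 := by
    push_cast
    linear_combination (a + c * t - b * s - d * (s * t)) * h + (-c ^ 2 + d ^ 2 * s ^ 2) * ht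
      + (b ^ 2 + d ^ 2 * Q + 2 * b * d * t) * hs
  obtain ⟨e1, -⟩ := irrational_coeff hsi h1
  obtain ⟨e2, -⟩ := irrational_coeff hti h2
  have hst2 : (s * t) ^ 2 = ((P * Q : ℚ) : ℝ) := by push_cast; rw [mul_pow, hs, ht]
  have key : ∀ u v : ℚ, u ^ 2 = P * Q * v ^ 2 → u = 0 ∧ v = 0 := by
    intro u v huv
    have huv' : ((u : ℝ) + v * (s * t)) * (u + (-v) * (s * t)) = 0 := by
      have : ((u : ℝ)) ^ 2 = P * Q * v ^ 2 := by exact_mod_cast huv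
      push_cast at hst2
      linear_combination this - v ^ 2 * hst2
    rcases mul_eq_zero.mp huv' with h0 | h0
    · exact irrational_coeff hsti h0
    · have := irrational_coeff (u := u) (v := -v) hsti (by push_cast; exact h0)
      exact ⟨this.1, neg_eq_zero.mp this.2⟩
  obtain ⟨ha, hd⟩ := key a d (by linarith)
  subst ha hd
  obtain ⟨hb, hc⟩ := key (P * b) c (by linear_combination P * e1)
  have hP : P ≠ 0 := by
    rintro rfl
    have : s = 0 := by simpa using hs
    exact hsi ⟨0, by simp [this]⟩
  exact ⟨rfl, (mul_eq_zero.mp hb).resolve_left hP, hc, rfl⟩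

/-- The ring hom `ℚ[√q][√p] → ℝ` determined by a choice of the two square roots. -/
def rootHom {P Q : ℚ} (s t : ℝ) (hs : s ^ 2 = P) (ht : t ^ 2 = Q) :
    QuadraticAlgebra (QuadraticAlgebra ℚ Q 0) (QuadraticAlgebra.mk P 0) 0 →+* ℝ where
  toFun z := z.re.re + z.im.re * s + z.re.im * t + z.im.im * (s * t)
  map_one' := by
    simp only [QuadraticAlgebra.re_one, QuadraticAlgebra.im_one, QuadraticAlgebra.re_zero,
      QuadraticAlgebra.im_zero]
    simp
  map_zero' := by
    simp only [QuadraticAlgebra.re_zero, QuadraticAlgebra.im_zero]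
    simp
  map_add' x y := by
    simp only [QuadraticAlgebra.re_add, QuadraticAlgebra.im_add]; push_cast; ring
  map_mul' x y := by
    simp only [QuadraticAlgebra.re_mul, QuadraticAlgebra.im_mul, QuadraticAlgebra.re_add,
      QuadraticAlgebra.im_add, QuadraticAlgebra.re_zero, QuadraticAlgebra.im_zero]
    push_cast
    rw [← hs, ← ht]; ring

/-- Conjugates of an integral element are integral: both are images of one element of the abstract
biquadratic algebra, the first one under an injective map. -/
lemma isIntegral_conj {s t s' t' : ℝ} {P Q : ℚ} (hs : s ^ 2 = P) (ht : t ^ 2 = Q)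
    (hsi : Irrational s) (hti : Irrational t) (hsti : Irrational (s * t))
    (hs' : s' ^ 2 = P) (ht' : t' ^ 2 = Q) {a b c d : ℚ}
    (h : IsIntegral ℤ ((a : ℝ) + b * s + c * t + d * (s * t))) :
    IsIntegral ℤ ((a : ℝ) + b * s' + c * t' + d * (s' * t')) := by
  have hinj : Function.Injective (rootHom s t hs ht) := by
    rw [injective_iff_map_eq_zero]
    intro z hz
    obtain ⟨h1, h2, h3, h4⟩ := coeff_zero hs ht hsi hti hsti hz
    ext <;> assumption
  have hz : IsIntegral ℤ (⟨⟨a, c⟩, ⟨b, d⟩⟩ :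
      QuadraticAlgebra (QuadraticAlgebra ℚ Q 0) (QuadraticAlgebra.mk P 0) 0) :=
    (isIntegral_algHom_iff (rootHom s t hs ht).toIntAlgHom hinj).mp h
  exact hz.map (rootHom s' t' hs' ht').toIntAlgHom

lemma rat_int {u : ℚ} (h : IsIntegral ℤ (u : ℝ)) : ∃ n : ℤ, u = n := by
  have h' : IsIntegral ℤ u := by
    have := (isIntegral_algebraMap_iff (R := ℤ) (A := ℚ) (B := ℝ)
      (algebraMap ℚ ℝ).injective (x := u))
    exact this.mp h
  obtain ⟨n, hn⟩ := IsIntegrallyClosed.isIntegral_iff.mp h'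
  exact ⟨n, by simpa using hn.symm⟩

/-- If `n` is squarefree and `n r²` is an integer, so is `r`. -/
lemma int_of_squarefree_mul {n : ℕ} (hn : Squarefree n) {r : ℚ} {k : ℤ}
    (h : (n : ℚ) * r ^ 2 = k) : ∃ m : ℤ, r = m := by
  have hden : (r.den : ℚ) ≠ 0 := by exact_mod_cast r.den_ne_zero
  have h1 : (n : ℤ) * r.num ^ 2 = k * (r.den : ℤ) ^ 2 := by
    have : (n : ℚ) * (r.num : ℚ) ^ 2 = k * (r.den : ℚ) ^ 2 := by
      rw [← h]
      have hr : r * r.den = r.num := Rat.mul_den_eq_num r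
      rw [← hr]; ring
    exact_mod_cast this
  have hco : IsCoprime ((r.den : ℤ) ^ 2) (r.num ^ 2) := by
    apply IsCoprime.pow
    rw [Int.isCoprime_iff_gcd_eq_one, Int.gcd_comm]
    exact r.reduced
  have h2 : ((r.den : ℤ) ^ 2) ∣ n := hco.dvd_of_dvd_mul_right ⟨k, by rw [h1]; ring⟩
  have h3 : r.den * r.den ∣ n := by
    rw [← sq]; exact_mod_cast h2
  have h4 := Nat.isUnit_iff.mp (hn _ h3)
  exact ⟨r.num, ((Rat.den_eq_one_iff r).mp h4).symm⟩

/-- Integrality in a quadratic field with `n ≡ 2, 3 mod 4`. -/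
lemma quad_int {n : ℕ} (hn : Squarefree n) (h4 : n % 4 = 2 ∨ n % 4 = 3) {θ : ℝ}
    (hθ : θ ^ 2 = n) {u v : ℚ} (h1 : IsIntegral ℤ ((u : ℝ) + v * θ))
    (h2 : IsIntegral ℤ ((u : ℝ) - v * θ)) : ∃ x y : ℤ, u = x ∧ v = y := by
  obtain ⟨m, hm⟩ : ∃ m : ℤ, 2 * u = m := by
    apply rat_int
    have := h1.add h2
    rwa [show (u : ℝ) + v * θ + (u - v * θ) = ((2 * u : ℚ) : ℝ) by push_cast; ring] at this
  obtain ⟨l, hl⟩ : ∃ l : ℤ, u ^ 2 - n * v ^ 2 = l := by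
    apply rat_int
    have := h1.mul h2
    rwa [show ((u : ℝ) + v * θ) * (u - v * θ) = ((u ^ 2 - n * v ^ 2 : ℚ) : ℝ) by
      push_cast; rw [← hθ]; ring] at this
  obtain ⟨w, hw⟩ : ∃ w : ℤ, 2 * v = w :=
    int_of_squarefree_mul hn (k := m ^ 2 - 4 * l) (by
      push_cast; rw [← hm, ← hl]; ring)
  have e : m ^ 2 - n * w ^ 2 = 4 * l := by
    have : (m : ℚ) ^ 2 - n * w ^ 2 = 4 * l := by rw [← hm, ← hl, ← hw]; ring
    exact_mod_cast this
  have hmw : m % 2 = 0 ∧ w % 2 = 0 := by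
    obtain ⟨n', hn'⟩ : ∃ n' : ℤ, (n : ℤ) = 4 * n' + 2 ∨ (n : ℤ) = 4 * n' + 3 :=
      ⟨n / 4, by omega⟩
    rcases Int.emod_two_eq_zero_or_one m with hm2 | hm2 <;>
    rcases Int.emod_two_eq_zero_or_one w with hw2 | hw2
    · exact ⟨hm2, hw2⟩
    all_goals
      exfalso
      obtain ⟨m', hm'⟩ : ∃ m', m = 2 * m' + m % 2 := ⟨m / 2, by omega⟩
      obtain ⟨w', hw'⟩ : ∃ w', w = 2 * w' + w % 2 := ⟨w / 2, by omega⟩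
      rw [hm2] at hm'
      rw [hw2] at hw'
      rw [hm', hw'] at e
      rcases hn' with hn' | hn' <;> rw [hn'] at e <;> ring_nf at e <;> omega
  refine ⟨m / 2, w / 2, ?_, ?_⟩
  · have : m = 2 * (m / 2) := by omega
    have : (m : ℚ) = 2 * ((m / 2 : ℤ) : ℚ) := by exact_mod_cast this
    linarith
  · have : w = 2 * (w / 2) := by omega
    have : (w : ℚ) = 2 * ((w / 2 : ℤ) : ℚ) := by exact_mod_cast this
    linarith

lemma mem_biqField_coeff {p q : ℕ} {x : ℝ} (hx : x ∈ biqField p q) :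
    ∃ a b c d : ℚ, x = (a : ℝ) + b * Real.sqrt p + c * Real.sqrt q
      + d * (Real.sqrt p * Real.sqrt q) := by
  have hs : Real.sqrt p ^ 2 = p := Real.sq_sqrt (Nat.cast_nonneg p)
  have ht : Real.sqrt q ^ 2 = q := Real.sq_sqrt (Nat.cast_nonneg q)
  have halg : ∀ n : ℕ, IsAlgebraic ℚ (Real.sqrt n) := by
    intro n
    have : IsIntegral ℚ (Real.sqrt n ^ 2) := by
      rw [Real.sq_sqrt (Nat.cast_nonneg n)]
      simpa using isIntegral_algebraMap (R := ℚ) (A := ℝ) (x := (n : ℚ))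
    exact (IsIntegral.of_pow (by norm_num) this).isAlgebraic
  have hx' : x ∈ Algebra.adjoin ℚ {Real.sqrt p, Real.sqrt q} := by
    rw [← IntermediateField.adjoin_toSubalgebra_of_isAlgebraic]
    · exact hx
    · rintro y (rfl | rfl)
      · exact halg p
      · exact halg q
  clear hx
  induction hx' using Algebra.adjoin_induction with
  | mem y hy =>
    rcases hy with rfl | rfl
    · exact ⟨0, 1, 0, 0, by simp⟩
    · exact ⟨0, 0, 1, 0, by simp⟩
  | algebraMap r => exact ⟨r, 0, 0, 0, by simp⟩
  | add x y _ _ h1 h2 =>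
    obtain ⟨a, b, c, d, e⟩ := h1
    obtain ⟨a', b', c', d', e'⟩ := h2
    exact ⟨a + a', b + b', c + c', d + d', by rw [e, e']; push_cast; ring⟩
  | mul x y _ _ h1 h2 =>
    obtain ⟨a, b, c, d, e⟩ := h1
    obtain ⟨a', b', c', d', e'⟩ := h2
    refine ⟨a * a' + p * b * b' + q * c * c' + p * q * d * d',
      a * b' + b * a' + q * (c * d' + d * c'), a * c' + c * a' + p * (b * d' + d * b'),
      a * d' + d * a' + b * c' + c * b', ?_⟩
    rw [e, e']; push_cast
    rw [← hs, ← ht]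
    rw [Real.sqrt_sq (Real.sqrt_nonneg _), Real.sqrt_sq (Real.sqrt_nonneg _)]
    ring

/-! ### The integral basis and seven squares -/

/-- The integral combination of the basis `1, √p, √q, (√p + √(pq)) / 2`. -/
noncomputable def comb (p q : ℕ) (a b c d : ℤ) : ℝ :=
  a + b * Real.sqrt p + c * Real.sqrt q + d * ((Real.sqrt p + Real.sqrt (p * q)) / 2)

lemma comb_mem {p q : ℕ} (hp4 : p % 4 = 2) (hq4 : q % 4 = 3) (a b c d : ℤ) :
    comb p q a b c d ∈ ringOfInt (biqField p q) := by
  have hst : Real.sqrt (p * q) = Real.sqrt p * Real.sqrt q :=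
    Real.sqrt_mul (Nat.cast_nonneg p) _
  have hs2 : Real.sqrt p ^ 2 = p := Real.sq_sqrt (Nat.cast_nonneg p)
  have ht2 : Real.sqrt q ^ 2 = q := Real.sq_sqrt (Nat.cast_nonneg q)
  have hcast_int : ∀ n : ℤ, IsIntegral ℤ (n : ℝ) := fun n => by
    simpa using isIntegral_algebraMap (R := ℤ) (A := ℝ) (x := n)
  have hs : IsIntegral ℤ (Real.sqrt p) := by
    refine IsIntegral.of_pow (n := 2) (by norm_num) ?_
    rw [hs2]; exact_mod_cast hcast_int p
  have ht : IsIntegral ℤ (Real.sqrt q) := by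
    refine IsIntegral.of_pow (n := 2) (by norm_num) ?_
    rw [ht2]; exact_mod_cast hcast_int q
  have hw : IsIntegral ℤ ((Real.sqrt p + Real.sqrt (p * q)) / 2) := by
    refine IsIntegral.of_pow (n := 2) (by norm_num) ?_
    obtain ⟨k, hk⟩ : ∃ k, p = 2 * k := ⟨p / 2, by omega⟩
    obtain ⟨l, hl⟩ : ∃ l, q + 1 = 2 * l := ⟨(q + 1) / 2, by omega⟩
    have hk' : (p : ℝ) = 2 * k := by exact_mod_cast hk
    have hl' : (q : ℝ) + 1 = 2 * l := by exact_mod_cast hl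
    have e : ((Real.sqrt p + Real.sqrt (p * q)) / 2) ^ 2
        = ((k : ℤ) : ℝ) * (((l : ℤ) : ℝ) + Real.sqrt q) := by
      rw [hst]
      push_cast
      linear_combination (1 + Real.sqrt q) ^ 2 / 4 * hs2 + p / 4 * ht2
        + (q + 1 + 2 * Real.sqrt q) / 4 * hk' + k / 2 * hl'
    rw [e]
    exact (hcast_int _).mul ((hcast_int _).add ht)
  refine ⟨?_, (((hcast_int a).add ((hcast_int b).mul hs)).add ((hcast_int c).mul ht)).add ((hcast_int d).mul hw)⟩
  have ms : Real.sqrt p ∈ biqField p q :=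
    IntermediateField.subset_adjoin ℚ _ (Set.mem_insert _ _)
  have mt : Real.sqrt q ∈ biqField p q :=
    IntermediateField.subset_adjoin ℚ _ (Set.mem_insert_of_mem _ rfl)
  unfold comb
  rw [hst]
  refine add_mem (add_mem (add_mem (intCast_mem _ _) (mul_mem (intCast_mem _ _) ms))
    (mul_mem (intCast_mem _ _) mt)) (mul_mem (intCast_mem _ _) (div_mem (add_mem ms
      (mul_mem ms mt)) (ofNat_mem _ 2)))

/-- Parities of the doubled coefficients of an integral element, from its relative norm to `ℚ(√q)`. -/
lemma parity {p q A B C D k l : ℤ} (hp4 : p % 4 = 2) (hq4 : q % 4 = 3)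
    (h1 : A ^ 2 + q * C ^ 2 - p * B ^ 2 - p * q * D ^ 2 = 4 * k) (h2 : A * C - p * B * D = 2 * l) :
    A % 2 = 0 ∧ C % 2 = 0 ∧ (B - D) % 2 = 0 := by
  obtain ⟨p', hp'⟩ : ∃ p', p = 4 * p' + 2 := ⟨p / 4, by omega⟩
  obtain ⟨q', hq'⟩ : ∃ q', q = 4 * q' + 3 := ⟨q / 4, by omega⟩
  obtain ⟨A', hA⟩ : ∃ A', A = 2 * A' + A % 2 := ⟨A / 2, by omega⟩
  obtain ⟨B', hB⟩ : ∃ B', B = 2 * B' + B % 2 := ⟨B / 2, by omega⟩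
  obtain ⟨C', hC⟩ : ∃ C', C = 2 * C' + C % 2 := ⟨C / 2, by omega⟩
  obtain ⟨D', hD⟩ : ∃ D', D = 2 * D' + D % 2 := ⟨D / 2, by omega⟩
  subst hp' hq'
  rcases Int.emod_two_eq_zero_or_one A with a | a <;>
  rcases Int.emod_two_eq_zero_or_one B with b | b <;>
  rcases Int.emod_two_eq_zero_or_one C with c | c <;>
  rcases Int.emod_two_eq_zero_or_one D with d | d <;>
  first
  | (exact ⟨a, c, by omega⟩)
  | (exfalso
     rw [a] at hA; rw [b] at hB; rw [c] at hC; rw [d] at hD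
     rw [hA, hB, hC, hD] at h1 h2
     ring_nf at h1 h2
     omega)

/-- `1, √p, √q, (√p + √(pq)) / 2` span the ring of integers: traces to the three quadratic subfields
show that twice the coefficients are integers, and the relative norm to `ℚ(√q)` fixes their parities. -/
lemma exists_comb {p q : ℕ} (hp : Squarefree p) (hq : Squarefree q) (hcop : Nat.Coprime p q)
    (hp4 : p % 4 = 2) (hq4 : q % 4 = 3) {x : ℝ} (hx : x ∈ ringOfInt (biqField p q)) :
    ∃ a b c d : ℤ, x = comb p q a b c d := by
  obtain ⟨hxK, hxi⟩ := hx
  obtain ⟨a, b, c, d, rfl⟩ := mem_biqField_coeff hxK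
  have hst : Real.sqrt (p * q) = Real.sqrt p * Real.sqrt q :=
    Real.sqrt_mul (Nat.cast_nonneg p) _
  have hs2 : Real.sqrt p ^ 2 = p := Real.sq_sqrt (Nat.cast_nonneg p)
  have ht2 : Real.sqrt q ^ 2 = q := Real.sq_sqrt (Nat.cast_nonneg q)
  have hpq : Squarefree (p * q) := (Nat.squarefree_mul hcop).mpr ⟨hp, hq⟩
  have hpq4 : (p * q) % 4 = 2 := by simp [Nat.mul_mod, hp4, hq4]
  have hsi := irrational_sqrt_of_squarefree hp (by omega)
  have hti := irrational_sqrt_of_squarefree hq (by omega)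
  have hsti := irrational_sqrt_of_squarefree hpq (by
    by_contra h
    interval_cases h' : p * q <;> omega)
  push_cast at hsti
  rw [hst] at hsti
  unfold comb
  rw [hst]
  generalize Real.sqrt p = s at *
  generalize Real.sqrt q = t at *
  have hs2' : s ^ 2 = ((p : ℚ) : ℝ) := by rw [hs2]; norm_cast
  have ht2' : t ^ 2 = ((q : ℚ) : ℝ) := by rw [ht2]; norm_cast
  have c2 := isIntegral_conj hs2' ht2' hsi hti hsti (s' := s) (t' := -t) hs2'
    (by rw [neg_sq]; exact ht2') hxi
  have c3 := isIntegral_conj hs2' ht2' hsi hti hsti (s' := -s) (t' := t) (by rw [neg_sq]; exact hs2')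
    ht2' hxi
  have c4 := isIntegral_conj hs2' ht2' hsi hti hsti (s' := -s) (t' := -t)
    (by rw [neg_sq]; exact hs2') (by rw [neg_sq]; exact ht2') hxi
  have tr : ∀ {x y : ℝ}, IsIntegral ℤ x → x = y → IsIntegral ℤ y := fun h e => e ▸ h
  obtain ⟨A, B, hA, hB⟩ := quad_int hp (Or.inl hp4) hs2 (u := 2 * a) (v := 2 * b)
    (tr (hxi.add c2) (by push_cast; ring)) (tr (c3.add c4) (by push_cast; ring))
  obtain ⟨-, C, -, hC⟩ := quad_int hq (Or.inr hq4) ht2 (u := 2 * a) (v := 2 * c)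
    (tr (hxi.add c3) (by push_cast; ring)) (tr (c2.add c4) (by push_cast; ring))
  obtain ⟨-, D, -, hD⟩ := quad_int hpq (Or.inl hpq4) (θ := s * t)
    (by rw [mul_pow, hs2, ht2]; push_cast; rfl) (u := 2 * a) (v := 2 * d)
    (tr (hxi.add c4) (by push_cast; ring)) (tr (c2.add c3) (by push_cast; ring))
  -- the relative norm to `ℚ(√q)`
  obtain ⟨k, l, hk, hl⟩ := quad_int hq (Or.inr hq4) ht2
    (u := a ^ 2 + q * c ^ 2 - p * b ^ 2 - p * q * d ^ 2) (v := 2 * (a * c - p * b * d))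
    (tr (hxi.mul c3) (by push_cast; rw [← hs2, ← ht2]; ring))
    (tr (c2.mul c4) (by push_cast; rw [← hs2, ← ht2]; ring))
  have e1 : A ^ 2 + (q : ℤ) * C ^ 2 - p * B ^ 2 - p * q * D ^ 2 = 4 * k := by
    have : (A : ℚ) ^ 2 + q * C ^ 2 - p * B ^ 2 - p * q * D ^ 2 = 4 * k := by
      rw [← hA, ← hB, ← hC, ← hD, ← hk]; ring
    exact_mod_cast this
  have e2 : A * C - (p : ℤ) * B * D = 2 * l := by
    have : (A : ℚ) * C - p * B * D = 2 * l := by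
      rw [← hA, ← hB, ← hC, ← hD, ← hl]; ring
    exact_mod_cast this
  obtain ⟨hA2, hC2, hBD⟩ := parity (by omega) (by omega) e1 e2
  obtain ⟨A', rfl⟩ : ∃ A', A = 2 * A' := ⟨A / 2, by omega⟩
  obtain ⟨C', rfl⟩ : ∃ C', C = 2 * C' := ⟨C / 2, by omega⟩
  obtain ⟨B', hB'⟩ : ∃ B', B = D + 2 * B' := ⟨(B - D) / 2, by omega⟩
  subst hB'
  refine ⟨A', B', C', D, ?_⟩
  have ha : (a : ℝ) = A' := by
    have : a = A' := by push_cast at hA; linarith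
    rw [this]; norm_cast
  have hc : (c : ℝ) = C' := by
    have : c = C' := by push_cast at hC; linarith
    rw [this]; norm_cast
  have hb : (b : ℝ) = D / 2 + B' := by
    have : b = D / 2 + B' := by push_cast at hB; linarith
    rw [this]; push_cast; ring
  have hd : (d : ℝ) = D / 2 := by
    have : d = D / 2 := by linarith
    rw [this]; push_cast; ring
  rw [ha, hb, hc, hd]; ring

/-- A sum of squares in the ring of integers is a sum of seven squares. -/
lemma seven_squares {p q : ℕ} (hp : Squarefree p) (hq : Squarefree q) (hcop : Nat.Coprime p q)
    (hp4 : p % 4 = 2) (hq4 : q % 4 = 3)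
    {β : ℝ} (h : IsSumOfSquaresIn (ringOfInt (biqField p q)) β) :
    SumOfNSquaresIn (ringOfInt (biqField p q)) 7 β := by
  obtain ⟨N, x, hx, rfl⟩ := h
  choose a b c d hxe using fun i => exists_comb hp hq hcop hp4 hq4 (hx i)
  obtain ⟨Y, hY⟩ := gram_rep fun i => ![a i, b i, c i, d i]
  let ω : Fin 4 → ℝ := ![1, Real.sqrt p, Real.sqrt q, (Real.sqrt p + Real.sqrt (p * q)) / 2]
  have hcomb : ∀ z : Fin 4 → ℤ, comb p q (z 0) (z 1) (z 2) (z 3) = ∑ j, z j * ω j := by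
    intro z; simp [Fin.sum_univ_four, comb, ω]
  have hsq : ∀ (M : ℕ) (Z : Fin M → Fin 4 → ℤ),
      ∑ i, comb p q (Z i 0) (Z i 1) (Z i 2) (Z i 3) ^ 2
        = ∑ j, ∑ l, ((∑ i, Z i j * Z i l : ℤ) : ℝ) * (ω j * ω l) := by
    intro M Z
    have h1 : ∀ i, comb p q (Z i 0) (Z i 1) (Z i 2) (Z i 3) ^ 2
        = ∑ j, ∑ l, ((Z i j : ℝ) * Z i l) * (ω j * ω l) := by
      intro i
      rw [hcomb, sq, Finset.sum_mul_sum]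
      exact Finset.sum_congr rfl fun j _ => Finset.sum_congr rfl fun l _ => by ring
    simp only [h1]
    rw [Finset.sum_comm]
    refine Finset.sum_congr rfl fun j _ => ?_
    rw [Finset.sum_comm]
    refine Finset.sum_congr rfl fun l _ => ?_
    push_cast
    rw [Finset.sum_mul]
  refine ⟨fun i => comb p q (Y i 0) (Y i 1) (Y i 2) (Y i 3), fun i => comb_mem hp4 hq4 _ _ _ _, ?_⟩
  rw [hsq]
  simp only [← hY, ← hsq]
  exact Finset.sum_congr rfl fun i _ => by rw [hxe]; simp

/-! ### The element that is not a sum of six squares -/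

lemma sum_sq_eq_one {ι : Type} [DecidableEq ι] {S : Finset ι} {f : ι → ℤ}
    (h : ∑ i ∈ S, f i ^ 2 = 1) : ∃ i ∈ S, f i ^ 2 = 1 ∧ ∀ j ∈ S, j ≠ i → f j = 0 := by
  have hne : ∃ i ∈ S, f i ≠ 0 := by
    by_contra hall
    push Not at hall
    rw [Finset.sum_eq_zero fun i hi => by rw [hall i hi]; rfl] at h
    exact absurd h (by norm_num)
  obtain ⟨i, hi, hfi⟩ := hne
  rw [← Finset.add_sum_erase _ _ hi] at h
  have h0 : 0 ≤ ∑ j ∈ S.erase i, f j ^ 2 := Finset.sum_nonneg fun _ _ => sq_nonneg _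
  have h1 : 0 < f i ^ 2 := by positivity
  refine ⟨i, hi, by omega, fun j hj hji => ?_⟩
  have h2 : ∑ j ∈ S.erase i, f j ^ 2 = 0 := by omega
  rw [Finset.sum_eq_zero_iff_of_nonneg fun _ _ => sq_nonneg _] at h2
  exact pow_eq_zero_iff two_ne_zero |>.mp (h2 j (Finset.mem_erase.mpr ⟨hji, hj⟩))

lemma not_three_sq_seven (x y z : ℤ) : x ^ 2 + y ^ 2 + z ^ 2 ≠ 7 := by
  intro h
  have hx : x ^ 2 < 3 ^ 2 := by nlinarith [sq_nonneg y, sq_nonneg z]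
  have hy : y ^ 2 < 3 ^ 2 := by nlinarith [sq_nonneg x, sq_nonneg z]
  have hz : z ^ 2 < 3 ^ 2 := by nlinarith [sq_nonneg y, sq_nonneg x]
  have hx := abs_lt.mp (abs_lt_of_sq_lt_sq hx (by norm_num))
  have hy := abs_lt.mp (abs_lt_of_sq_lt_sq hy (by norm_num))
  have hz := abs_lt.mp (abs_lt_of_sq_lt_sq hz (by norm_num))
  obtain ⟨x1, x2⟩ := hx
  obtain ⟨y1, y2⟩ := hy
  obtain ⟨z1, z2⟩ := hz
  interval_cases x <;> interval_cases y <;> interval_cases z <;> omega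

/-- The comparison of coefficients for a sum of six squares. With
`xᵢ = aᵢ + bᵢ√p + cᵢ√q + dᵢ(√p+√(pq))/2` and `e = 2b + d`, the hypotheses `h1`–`h4` are, up to
constant factors, the coefficients of `1, √p, √q, √(pq)`. The first one and `∑e² ≡ ∑d² (mod 4)` force
`∑d² = 1`, `∑e² = 5`, `∑c² = 1`, `∑a² = 9`; the others determine three of the `aᵢ` as `0, ±1, ±1`, so
that `7` would be a sum of three integral squares. -/
lemma no_six {p q : ℤ} (hp4 : p % 4 = 2) (hq4 : q % 4 = 3) (hp10 : 10 ≤ p) (hq10 : 10 ≤ q)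
    (a b c d e : Fin 6 → ℤ) (he : ∀ i, e i = 2 * b i + d i)
    (h1 : 4 * ∑ i, a i ^ 2 + p * ∑ i, e i ^ 2 + 4 * q * ∑ i, c i ^ 2 + p * q * ∑ i, d i ^ 2
      = 36 + 5 * p + 4 * q + p * q)
    (h2 : ∑ i, a i * e i + q * ∑ i, c i * d i = 2)
    (h3 : 4 * ∑ i, a i * c i + p * ∑ i, e i * d i = 4 + p)
    (h4 : ∑ i, a i * d i + ∑ i, e i * c i = 0) : False := by
  have hA0 : 0 ≤ ∑ i, a i ^ 2 := Finset.sum_nonneg fun _ _ => sq_nonneg _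
  have hE0 : 0 ≤ ∑ i, e i ^ 2 := Finset.sum_nonneg fun _ _ => sq_nonneg _
  have hC0 : 0 ≤ ∑ i, c i ^ 2 := Finset.sum_nonneg fun _ _ => sq_nonneg _
  have hD0 : 0 ≤ ∑ i, d i ^ 2 := Finset.sum_nonneg fun _ _ => sq_nonneg _
  -- `e² = d² + 4(b² + bd)`, so the two sums of squares agree modulo `4`
  have hED : ∑ i, e i ^ 2 = ∑ i, d i ^ 2 + 4 * ∑ i, (b i ^ 2 + b i * d i) := by
    rw [Finset.mul_sum, ← Finset.sum_add_distrib]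
    exact Finset.sum_congr rfl fun i _ => by rw [he]; ring
  have hq11 : 11 ≤ q := by omega
  have hpq : 48 ≤ (p - 4) * (q - 3) := by nlinarith
  have hD1 : ∑ i, d i ^ 2 = 1 := by
    have hlt : ∑ i, d i ^ 2 < 2 := by
      by_contra hge
      push Not at hge
      have hE2 : 2 ≤ ∑ i, e i ^ 2 ∨ 4 ≤ ∑ i, d i ^ 2 := by omega
      generalize ∑ i, e i ^ 2 = E at *
      generalize ∑ i, d i ^ 2 = D at *
      have hqC : 0 ≤ q * ∑ i, c i ^ 2 := mul_nonneg (by omega) hC0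
      rcases hE2 with hE2 | hD4
      · have k1 : 2 * p ≤ p * E := by nlinarith
        have k2 : 2 * (p * q) ≤ p * q * D := by nlinarith [mul_pos (by omega : 0 < p) (by omega : 0 < q)]
        -- equality forces `a = 0`, whence `p ∣ 4` by the coefficient of `√q`
        have hAz : ∑ i, a i ^ 2 = 0 := by nlinarith
        have haz : ∀ i, a i = 0 := fun i => by
          rw [Finset.sum_eq_zero_iff_of_nonneg fun _ _ => sq_nonneg _] at hAz
          exact pow_eq_zero_iff two_ne_zero |>.mp (hAz i (Finset.mem_univ i))
        simp only [haz, zero_mul, Finset.sum_const_zero, mul_zero, zero_add] at h3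
        have : p ∣ 4 := (Int.dvd_add_left (dvd_refl p)).mp ⟨_, h3.symm⟩
        have := Int.le_of_dvd (by norm_num) this
        omega
      · have k1 : 0 ≤ p * E := by positivity
        have k2 : 4 * (p * q) ≤ p * q * D := by nlinarith [mul_pos (by omega : 0 < p) (by omega : 0 < q)]
        nlinarith
    have hne : ∑ i, d i ^ 2 ≠ 0 := by
      intro h0
      have hdz : ∀ i, d i = 0 := fun i => by
        rw [Finset.sum_eq_zero_iff_of_nonneg fun _ _ => sq_nonneg _] at h0
        exact pow_eq_zero_iff two_ne_zero |>.mp (h0 i (Finset.mem_univ i))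
      simp only [hdz, mul_zero, Finset.sum_const_zero, add_zero] at h3
      omega
    omega
  obtain ⟨i, -, hdi, hdj⟩ := sum_sq_eq_one hD1
  replace hdj : ∀ j, j ≠ i → d j = 0 := fun j => hdj j (Finset.mem_univ j)
  have sumd : ∀ f : Fin 6 → ℤ, ∑ j, f j * d j = f i * d i := fun f =>
    Finset.sum_eq_single i (fun j _ hj => by rw [hdj j hj, mul_zero]) (fun h => absurd (Finset.mem_univ i) h)
  rw [sumd] at h2 h3 h4
  have hdi' : d i = 1 ∨ d i = -1 := mul_self_eq_one_iff.mp (sq (_ : ℤ) ▸ hdi)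
  rw [hD1] at h1 hED
  have hei : e i % 2 = 1 := by have := he i; omega
  have hC1 : 1 ≤ ∑ j, c j ^ 2 := by
    by_contra hlt
    have h0 : ∑ j, c j ^ 2 = 0 := by omega
    have hcz : ∀ i, c i = 0 := fun i => by
      rw [Finset.sum_eq_zero_iff_of_nonneg fun _ _ => sq_nonneg _] at h0
      exact pow_eq_zero_iff two_ne_zero |>.mp (h0 i (Finset.mem_univ i))
    simp only [hcz, mul_zero, Finset.sum_const_zero, zero_add] at h3
    have : p ∣ 4 := (Int.dvd_add_left (dvd_refl p)).mp ⟨_, h3.symm⟩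
    have := Int.le_of_dvd (by norm_num) this
    omega
  have hE1 : ∑ j, e j ^ 2 ≠ 1 := by
    intro hE
    obtain ⟨j, -, hej, hel⟩ := sum_sq_eq_one hE
    have hij : i = j := by
      by_contra hne
      rw [hel i (Finset.mem_univ i) hne] at hei
      omega
    subst hij
    have sume : ∀ f : Fin 6 → ℤ, ∑ j, f j * e j = f i * e i := fun f =>
      Finset.sum_eq_single i (fun j _ hj => by rw [hel j (Finset.mem_univ j) hj, mul_zero])
        (fun h => absurd (Finset.mem_univ i) h)
    simp only [mul_comm (e _) (c _)] at h4
    rw [sume] at h2 h4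
    have hu : (q - 1) * (c i * d i) = 2 := by
      linear_combination h2 - e i * d i * h4 + c i * d i * hej + a i * e i * hdi
    have : q - 1 ∣ 2 := ⟨_, hu.symm⟩
    have := Int.le_of_dvd (by norm_num) this
    omega
  have hE5 : ∑ j, e j ^ 2 = 5 ∧ ∑ j, c j ^ 2 = 1 ∧ ∑ j, a j ^ 2 = 9 := by
    obtain ⟨m, hm⟩ : ∃ m, ∑ j, e j ^ 2 = 5 + 4 * m :=
      ⟨∑ j, (b j ^ 2 + b j * d j) - 1, by omega⟩
    rw [hm] at h1 ⊢
    obtain ⟨n, hn⟩ : ∃ n, ∑ j, c j ^ 2 = 1 + n := ⟨∑ j, c j ^ 2 - 1, by omega⟩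
    rw [hn] at h1 ⊢
    have hm0 : 0 ≤ m := by omega
    have hn0 : 0 ≤ n := by omega
    have hpm := mul_nonneg (by omega : 0 ≤ p) hm0
    have hqn := mul_nonneg (by omega : 0 ≤ q) hn0
    have key : ∑ j, a j ^ 2 + p * m + q * n = 9 := by linarith
    have hm1 : m = 0 := by nlinarith
    have hn1 : n = 0 := by nlinarith
    subst hm1 hn1
    simp at key
    simp [key]
  obtain ⟨hE, hC, hA⟩ := hE5
  have hei2 : e i ^ 2 = 1 := by
    have := Finset.single_le_sum (f := fun j => e j ^ 2) (fun _ _ => sq_nonneg _) (Finset.mem_univ i)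
    simp only [hE] at this
    have hlt := abs_lt.mp (abs_lt_of_sq_lt_sq (by omega : e i ^ 2 < 3 ^ 2) (by norm_num))
    obtain ⟨l1, l2⟩ := hlt
    have : e i = 1 ∨ e i = -1 := by omega
    rcases this with h | h <;> rw [h] <;> norm_num
  have hb1 : ∑ j ∈ Finset.univ.erase i, b j ^ 2 = 1 := by
    rw [← Finset.add_sum_erase _ _ (Finset.mem_univ i), hei2] at hE
    have : ∑ j ∈ Finset.univ.erase i, e j ^ 2 = 4 * ∑ j ∈ Finset.univ.erase i, b j ^ 2 := by
      rw [Finset.mul_sum]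
      refine Finset.sum_congr rfl fun j hj => ?_
      rw [he, hdj j (Finset.ne_of_mem_erase hj)]; ring
    omega
  obtain ⟨j, hj, hbj, hbl⟩ := sum_sq_eq_one hb1
  have hji : j ≠ i := Finset.ne_of_mem_erase hj
  have hel : ∀ l, l ≠ i → l ≠ j → e l = 0 := by
    intro l hli hlj
    rw [he, hdj l hli, hbl l (Finset.mem_erase.mpr ⟨hli, Finset.mem_univ l⟩) hlj]; rfl
  have hej : e j = 2 * b j := by rw [he, hdj j hji]; ring
  have sume : ∑ l, a l * e l = a i * e i + a j * e j := by
    rw [← Finset.sum_subset (Finset.subset_univ {i, j})]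
    · rw [Finset.sum_pair hji.symm]
    · intro l _ hl
      simp only [Finset.mem_insert, Finset.mem_singleton, not_or] at hl
      rw [hel l hl.1 hl.2, mul_zero]
  obtain ⟨k, -, hck, hcl⟩ := sum_sq_eq_one hC
  have sumc : ∀ f : Fin 6 → ℤ, ∑ j, f j * c j = f k * c k := fun f =>
    Finset.sum_eq_single k (fun j _ hj => by rw [hcl j (Finset.mem_univ j) hj, mul_zero])
      (fun h => absurd (Finset.mem_univ k) h)
  rw [sumc] at h3 h4
  rw [sume] at h2
  have hck' : c k = 1 ∨ c k = -1 := mul_self_eq_one_iff.mp (sq (_ : ℤ) ▸ hck)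
  have hei' : e i = 1 ∨ e i = -1 := mul_self_eq_one_iff.mp (sq (_ : ℤ) ▸ hei2)
  have hbj' : b j = 1 ∨ b j = -1 := mul_self_eq_one_iff.mp (sq (_ : ℤ) ▸ hbj)
  have hak9 : a k ^ 2 ≤ 9 := by
    have := Finset.single_le_sum (f := fun j => a j ^ 2) (fun _ _ => sq_nonneg _) (Finset.mem_univ k)
    simpa only [hA] using this
  have hak : -4 < a k ∧ a k < 4 :=
    abs_lt.mp (abs_lt_of_sq_lt_sq (by omega : a k ^ 2 < 4 ^ 2) (by norm_num))
  have hed : e i = d i ∧ a k = c k := by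
    rcases hei' with h | h <;> rcases hdi' with h' | h' <;> rcases hck' with h'' | h'' <;>
      rw [h, h', h''] at h3 <;> omega
  obtain ⟨hed, hac⟩ := hed
  have hki : k ≠ i := by
    rintro rfl
    rw [hac, hed] at h4
    rcases hdi' with h' | h' <;> rcases hck' with h'' | h'' <;> rw [h', h''] at h4 <;> omega
  have hci : c i = 0 := hcl i (Finset.mem_univ i) hki.symm
  rw [hci, hed] at h2
  have hkj : k ≠ j := by
    rintro rfl
    rw [hej] at h2 h4
    rw [hac] at h2
    rcases hdi' with h' | h' <;> rcases hck' with h'' | h'' <;> rcases hbj' with h | h <;>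
      rw [h', h'', h] at h2 h4 <;> omega
  rw [hel k hki hkj] at h4
  have hai : a i = 0 := by
    rcases hdi' with h' | h' <;> rw [h'] at h4 <;> omega
  have haj : a j ^ 2 = 1 := by
    rw [hai, hej] at h2
    have : a j = 1 ∨ a j = -1 := by
      rcases hbj' with h | h <;> rw [h] at h2 <;> omega
    rcases this with h | h <;> rw [h] <;> norm_num
  -- the three remaining squares `aₗ²` add up to `9 - 0 - 1 - 1 = 7`
  have hcard : (Finset.univ \ {i, j, k} : Finset (Fin 6)).card = 3 := by
    rw [Finset.card_sdiff_of_subset (Finset.subset_univ _), Finset.card_eq_three.mpr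
      ⟨i, j, k, hji.symm, hki.symm, hkj.symm, rfl⟩]
    rfl
  obtain ⟨x, y, z, hxy, hxz, hyz, hS⟩ := Finset.card_eq_three.mp hcard
  rw [← Finset.sum_sdiff (Finset.subset_univ ({i, j, k} : Finset (Fin 6))), hS,
    Finset.sum_insert (by simp [hxy, hxz]), Finset.sum_pair hyz,
    Finset.sum_insert (by simp [hji.symm, hki.symm]), Finset.sum_pair hkj.symm, hai, haj, hac, hck]
    at hA
  exact not_three_sq_seven (a x) (a y) (a z) (by linarith)

/-- Expanding in the basis `1, √p, √q, √(pq)` reduces to `no_six`. -/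
lemma not_six {p q : ℕ} (hp : Squarefree p) (hq : Squarefree q) (hcop : Nat.Coprime p q)
    (hp4 : p % 4 = 2) (hq4 : q % 4 = 3) (hp10 : 10 ≤ p) (hq10 : 10 ≤ q) :
    ¬ SumOfNSquaresIn (ringOfInt (biqField p q)) 6
      (7 + (1 + Real.sqrt p) ^ 2 + (1 + Real.sqrt q) ^ 2 +
        ((Real.sqrt p + Real.sqrt (p * q)) / 2) ^ 2) := by
  rintro ⟨x, hx, hsum⟩
  choose a b c d hxe using fun i => exists_comb hp hq hcop hp4 hq4 (hx i)
  have hst : Real.sqrt (p * q) = Real.sqrt p * Real.sqrt q :=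
    Real.sqrt_mul (Nat.cast_nonneg p) _
  have hs2 : Real.sqrt p ^ 2 = p := Real.sq_sqrt (Nat.cast_nonneg p)
  have ht2 : Real.sqrt q ^ 2 = q := Real.sq_sqrt (Nat.cast_nonneg q)
  have hpq : Squarefree (p * q) := (Nat.squarefree_mul hcop).mpr ⟨hp, hq⟩
  have hsi := irrational_sqrt_of_squarefree hp (by omega)
  have hti := irrational_sqrt_of_squarefree hq (by omega)
  have hsti := irrational_sqrt_of_squarefree hpq (by nlinarith)
  push_cast at hsti
  rw [hst] at hsti
  simp only [hxe, comb, hst] at hsum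
  generalize Real.sqrt p = s at *
  generalize Real.sqrt q = t at *
  have hs2' : s ^ 2 = ((p : ℚ) : ℝ) := by rw [hs2]; norm_cast
  have ht2' : t ^ 2 = ((q : ℚ) : ℝ) := by rw [ht2]; norm_cast
  let e : Fin 6 → ℤ := fun i => 2 * b i + d i
  have hterm : ∀ i, 4 * ((a i : ℝ) + b i * s + c i * t + d i * ((s + s * t) / 2)) ^ 2
      = ((4 * a i ^ 2 + p * e i ^ 2 + 4 * q * c i ^ 2 + p * q * d i ^ 2 : ℤ) : ℝ)
        + ((4 * (a i * e i) + 4 * q * (c i * d i) : ℤ) : ℝ) * s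
        + ((8 * (a i * c i) + 2 * p * (e i * d i) : ℤ) : ℝ) * t
        + ((4 * (a i * d i) + 4 * (e i * c i) : ℤ) : ℝ) * (s * t) := by
    intro i
    simp only [e]
    push_cast
    rw [← hs2, ← ht2]
    ring
  have hsum4 := congrArg (fun y : ℝ => 4 * y) hsum
  simp only [Finset.mul_sum, hterm, Finset.sum_add_distrib, ← Finset.sum_mul] at hsum4
  have hz := coeff_zero hs2' ht2' hsi hti hsti
    (a := ((36 + 5 * p + 4 * q + p * q
      - ∑ i, (4 * a i ^ 2 + p * e i ^ 2 + 4 * q * c i ^ 2 + p * q * d i ^ 2) : ℤ) : ℚ))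
    (b := ((8 - ∑ i, (4 * (a i * e i) + 4 * q * (c i * d i)) : ℤ) : ℚ))
    (c := ((8 + 2 * p - ∑ i, (8 * (a i * c i) + 2 * p * (e i * d i)) : ℤ) : ℚ))
    (d := ((0 - ∑ i, (4 * (a i * d i) + 4 * (e i * c i)) : ℤ) : ℚ)) (by
      rw [Rat.cast_intCast, Rat.cast_intCast, Rat.cast_intCast, Rat.cast_intCast]
      push_cast at hsum4 ⊢
      linear_combination hsum4 - (4 + (1 + t) ^ 2) * hs2 - (4 + p) * ht2)
  simp only [Int.cast_eq_zero, Finset.sum_add_distrib, ← Finset.mul_sum] at hz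
  obtain ⟨z1, z2, z3, z4⟩ := hz
  exact no_six (p := p) (q := q) (by omega) (by omega) (by omega) (by omega) a b c d e
    (fun _ => rfl) (by linarith) (by linarith) (by linarith) (by linarith)

/-- For coprime squarefree `p ≡ 2`, `q ≡ 3 (mod 4)` with `p, q ≥ 10`,
the Pythagoras number of the ring of integers of `K = ℚ(√p, √q)` equals `7`:
every sum of squares is a sum of `7` squares, and the element
`7 + (1+√p)² + (1+√q)² + ((√p+√(pq))/2)²` is a sum of `7` squares but not of `6`. -/
theorem pythagoras_biquadratic_eq_seven
    (p q : ℕ) (hp : Squarefree p) (hq : Squarefree q) (hcop : Nat.Coprime p q)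
    (hp4 : p % 4 = 2) (hq4 : q % 4 = 3) (hp10 : 10 ≤ p) (hq10 : 10 ≤ q) :
    (∀ β ∈ ringOfInt (biqField p q), IsSumOfSquaresIn (ringOfInt (biqField p q)) β →
      SumOfNSquaresIn (ringOfInt (biqField p q)) 7 β) ∧
    SumOfNSquaresIn (ringOfInt (biqField p q)) 7
      (7 + (1 + Real.sqrt p) ^ 2 + (1 + Real.sqrt q) ^ 2 +
        ((Real.sqrt p + Real.sqrt (p * q)) / 2) ^ 2) ∧
    ¬ SumOfNSquaresIn (ringOfInt (biqField p q)) 6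
      (7 + (1 + Real.sqrt p) ^ 2 + (1 + Real.sqrt q) ^ 2 +
        ((Real.sqrt p + Real.sqrt (p * q)) / 2) ^ 2) := by
  refine ⟨fun β _ hβ => seven_squares hp hq hcop hp4 hq4 hβ,
    seven_squares hp hq hcop hp4 hq4 ?_,
    not_six hp hq hcop hp4 hq4 hp10 hq10⟩
  -- the defining expression is a sum of ten squares, seven of them `1²`
  refine ⟨10, Fin.cons (comb p q 1 1 0 0) (Fin.cons (comb p q 1 0 1 0)
    (Fin.cons (comb p q 0 0 0 1) fun _ : Fin 7 => comb p q 1 0 0 0)), ?_, ?_⟩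
  · refine Fin.cases (comb_mem hp4 hq4 _ _ _ _) (Fin.cases (comb_mem hp4 hq4 _ _ _ _)
      (Fin.cases (comb_mem hp4 hq4 _ _ _ _) fun _ => comb_mem hp4 hq4 _ _ _ _))
  · simp only [Fin.sum_univ_succ (n := 9), Fin.sum_univ_succ (n := 8), Fin.sum_univ_succ (n := 7),
      Fin.cons_zero, Fin.cons_succ, comb, Finset.sum_const, Finset.card_univ, Fintype.card_fin]
    push_cast
    simp only [nsmul_eq_mul]
    push_cast
    ring
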